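/- arXiv:1210.3525 — 4 statements merged into one kernel-verified Lean document; each statement's English description precedes it below -/
import Mathlib

section
/- Let μ be an ergodic translation-invariant Gibbs measure for the 1-2 model on the hexagonal lattice ℍ (with any weights a, b, c > 0), let τ₀ ∈ {001, 010, 011, 100, 101, 110} be any local configuration type, and let 𝒩_{τ₀}(ω) denote the number of infinite τ₀-clusters of ω. Then for every integer k with 1 < k < ∞, μ({ω : 𝒩_{τ₀}(ω) = k}) = 0. -/
open MeasureTheory

/-- Vertices of the hexagonal lattice: `(x, y, t)` with `t = true` the "upper" vertex. -/
abbrev HexV : Type := ℤ × ℤ × Bool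

/-- Edges of the hexagonal lattice: `(x, y, k)` with `k = 0` the a-type (horizontal) edge
joining `(x,y,1)` to `(x,y,0)`, `k = 1` the b-type edge joining `(x,y,1)` to `(x+1,y,0)`,
`k = 2` the c-type edge joining `(x,y,1)` to `(x,y+1,0)`. -/
abbrev HexE : Type := ℤ × ℤ × Fin 3

/-- A configuration assigns present/absent to each edge. -/
abbrev Config : Type := HexE → Bool

def end1 (e : HexE) : HexV := (e.1, e.2.1, true)

def end2 (e : HexE) : HexV :=
  if e.2.2 = 0 then (e.1, e.2.1, false)
  else if e.2.2 = 1 then (e.1 + 1, e.2.1, false)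
  else (e.1, e.2.1 + 1, false)

/-- The edges incident to a vertex, indexed so that index `0` is the a-type (horizontal)
edge, index `1` the b-type edge, index `2` the c-type edge. -/
def edgesAt (v : HexV) : Fin 3 → HexE := fun i =>
  if v.2.2 then (v.1, v.2.1, i)
  else if i = 0 then (v.1, v.2.1, 0)
  else if i = 1 then (v.1 - 1, v.2.1, 1)
  else (v.1, v.2.1 - 1, 2)

/-- Local configuration of `ω` at `v`: digit `0` (rightmost) is the a-type edge,
digit `1` the b-type edge, digit `2` (leftmost) the c-type edge. -/
def localConf (ω : Config) (v : HexV) : Fin 3 → Bool := fun i => ω (edgesAt v i)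

/-- A 1-2 model configuration: every vertex is incident to one or two present edges. -/
def IsConfig (ω : Config) : Prop :=
  ∀ v : HexV,
    1 ≤ (Finset.univ.filter fun i : Fin 3 => localConf ω v i = true).card ∧
    (Finset.univ.filter fun i : Fin 3 => localConf ω v i = true).card ≤ 2

/-- The local configuration type `{001}` : only the a-type (horizontal) edge is present. -/
def conf001 : Fin 3 → Bool := ![true, false, false]

/-- The six admissible local configuration types `{001},…,{110}`. -/
def validConf (τ : Fin 3 → Bool) : Prop :=
  τ ≠ ![false, false, false] ∧ τ ≠ ![true, true, true]

/-- Vertex weight: `w(001)=w(110)=a`, `w(010)=w(101)=b`, `w(011)=w(100)=c`. -/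
def weight (a b c : ℝ) (f : Fin 3 → Bool) : ℝ :=
  match f 2, f 1, f 0 with
  | false, false, true  => a
  | true,  true,  false => a
  | false, true,  false => b
  | true,  false, true  => b
  | false, true,  true  => c
  | true,  false, false => c
  | false, false, false => 0
  | true,  true,  true  => 0

/-- Adjacency in the hexagonal lattice. -/
def HexAdj (v w : HexV) : Prop :=
  v ≠ w ∧ ∃ e : HexE, (v = end1 e ∨ v = end2 e) ∧ (w = end1 e ∨ w = end2 e)

/-- Adjacency restricted to a vertex set `S`. -/
def adjIn (S : Set HexV) (v w : HexV) : Prop := HexAdj v w ∧ v ∈ S ∧ w ∈ S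

/-- The connected component of `v` in the subgraph induced on `S`. -/
def compOf (S : Set HexV) (v : HexV) : Set HexV := {w | Relation.ReflTransGen (adjIn S) v w}

/-- `C` is a connected component of the subgraph induced on `S`. -/
def IsCompOf (S : Set HexV) (C : Set HexV) : Prop := ∃ v ∈ S, C = compOf S v

/-- Vertices whose local configuration equals `τ`. -/
def confSet (ω : Config) (τ : Fin 3 → Bool) : Set HexV := {v | localConf ω v = τ}

/-- A `τ`-cluster of `ω`. -/
def IsCluster (ω : Config) (τ : Fin 3 → Bool) (C : Set HexV) : Prop :=
  IsCompOf (confSet ω τ) C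

/-- The number of infinite `τ`-clusters of `ω`, as an extended natural number. -/
noncomputable def numInfClusters (ω : Config) (τ : Fin 3 → Bool) : ℕ∞ :=
  {C : Set HexV | IsCluster ω τ C ∧ C.Infinite}.encard

def endsFinset (e : HexE) : Finset HexV := {end1 e, end2 e}

/-- Vertices incident to an edge of `F`. -/
def verts (F : Finset HexE) : Finset HexV := F.biUnion endsFinset

/-- Edges sharing an endpoint with an edge of `F`. -/
def edgeNbhd (F : Finset HexE) : Set HexE :=
  {e' | ∃ e ∈ F,
    end1 e = end1 e' ∨ end1 e = end2 e' ∨ end2 e = end1 e' ∨ end2 e = end2 e'}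

/-- Cylinder event: configurations agreeing with `σ` on `S`. -/
def cyl (S : Set HexE) (σ : Config) : Set Config := {ω | ∀ e ∈ S, ω e = σ e}

/-- A Gibbs measure for the 1-2 model with weights `a`, `b`, `c`. -/
def IsGibbs (a b c : ℝ) (μ : Measure Config) : Prop :=
  IsProbabilityMeasure μ ∧ μ {ω | IsConfig ω} = 1 ∧
  ∀ F : Finset HexE, ∀ σ τ : Config, IsConfig σ → IsConfig τ →
    (∀ e ∉ F, σ e = τ e) →
    μ (cyl (↑F ∪ edgeNbhd F) σ) *
        ENNReal.ofReal (∏ v ∈ verts F, weight a b c (localConf τ v)) =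
      μ (cyl (↑F ∪ edgeNbhd F) τ) *
        ENNReal.ofReal (∏ v ∈ verts F, weight a b c (localConf σ v))

/-- Translation of edges by `g ∈ ℤ²`. -/
def shiftE (g : ℤ × ℤ) (e : HexE) : HexE := (e.1 + g.1, e.2.1 + g.2, e.2.2)

/-- Induced translation action on configurations. -/
def shiftConfig (g : ℤ × ℤ) (ω : Config) : Config := fun e => ω (shiftE g e)

/-- Translation invariance of a measure on configurations. -/
def TransInvariant (μ : Measure Config) : Prop :=
  ∀ g : ℤ × ℤ, μ.map (shiftConfig g) = μ

/-- Ergodicity: every translation-invariant measurable event has measure `0` or `1`. -/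
def IsErgodicTI (μ : Measure Config) : Prop :=
  ∀ A : Set Config, MeasurableSet A → (∀ g, shiftConfig g ⁻¹' A = A) → μ A = 0 ∨ μ A = 1

/-- The box `B_n(i,j)`. -/
def box (n : ℕ) (i j : ℤ) : Set HexV :=
  {v | |v.1 - i| ≤ (n : ℤ) ∧ |v.2.1 - j| ≤ (n : ℤ)}

/-- Vertices outside `B` adjacent to a vertex of `B`. -/
def outerBoundary (B : Set HexV) : Set HexV := {v | v ∉ B ∧ ∃ w ∈ B, HexAdj v w}

/-- `B_N(i,j)` is an encounter box for `ω` with respect to the infinite `{001}`-cluster `C`. -/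
def IsEncounterBoxWrt (ω : Config) (N : ℕ) (i j : ℤ) (C : Set HexV) : Prop :=
  IsCluster ω conf001 C ∧ C.Infinite ∧ box N i j ⊆ C ∧
  (∀ D, IsCompOf (C \ box (N + 2) i j) D → D.Infinite) ∧
  {D : Set HexV | IsCompOf (C \ box (N + 2) i j) D ∧ D.Infinite}.encard = 3

/-- `B_N(i,j)` is an encounter box for `ω`. -/
def IsEncounterBox (ω : Config) (N : ℕ) (i j : ℤ) : Prop :=
  ∃ C : Set HexV, IsEncounterBoxWrt ω N i j C

/-- A 3-partition of `Y`: an unordered triple of pairwise disjoint nonempty sets with union `Y`. -/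
def IsThreePartition {α : Type*} (Y : Set α) (P : Set (Set α)) : Prop :=
  ∃ P₁ P₂ P₃ : Set α, P = {P₁, P₂, P₃} ∧
    P₁.Nonempty ∧ P₂.Nonempty ∧ P₃.Nonempty ∧
    Disjoint P₁ P₂ ∧ Disjoint P₁ P₃ ∧ Disjoint P₂ P₃ ∧
    P₁ ∪ P₂ ∪ P₃ = Y

/-- Two 3-partitions are compatible if their parts can be ordered so that `Q₂ ∪ Q₃ ⊆ P₁`. -/
def CompatiblePartitions {α : Type*} (P Q : Set (Set α)) : Prop :=
  ∃ P₁ ∈ P, ∃ Q₁ ∈ Q, ∀ R ∈ Q, R ≠ Q₁ → R ⊆ P₁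



/-- neighbour of `v` through its edge of type `m` -/
def nb (m : Fin 3) (v : HexV) : HexV :=
  if v.2.2 then
    (if m = 0 then (v.1, v.2.1, false) else if m = 1 then (v.1 + 1, v.2.1, false)
      else (v.1, v.2.1 + 1, false))
  else
    (if m = 0 then (v.1, v.2.1, true) else if m = 1 then (v.1 - 1, v.2.1, true)
      else (v.1, v.2.1 - 1, true))

lemma nb_nb (m : Fin 3) (v : HexV) : nb m (nb m v) = v := by
  obtain ⟨x, y, t⟩ := v
  fin_cases m <;> cases t <;> simp [nb]

lemma edgesAt_nb (m : Fin 3) (v : HexV) : edgesAt (nb m v) m = edgesAt v m := by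
  obtain ⟨x, y, t⟩ := v
  fin_cases m <;> cases t <;> simp [nb, edgesAt]

lemma nb_hex (i j k : Fin 3) (hij : i ≠ j) (hik : i ≠ k) (hjk : j ≠ k) (v : HexV) :
    nb k (nb i (nb j v)) = nb j (nb i (nb k v)) := by
  obtain ⟨x, y, t⟩ := v
  fin_cases i <;> fin_cases j <;> fin_cases k <;> simp at hij hik hjk <;>
    cases t <;> simp [nb]

lemma edgesAt_snd (v : HexV) (m : Fin 3) : (edgesAt v m).2.2 = m := by
  obtain ⟨x, y, t⟩ := v
  fin_cases m <;> cases t <;> simp [edgesAt]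

lemma edgesAt_eq {u v : HexV} {m m' : Fin 3} (h : edgesAt u m' = edgesAt v m) :
    m' = m ∧ (u = v ∨ u = nb m v) := by
  have h1 : m' = m := by rw [← edgesAt_snd u m', h, edgesAt_snd]
  subst h1
  refine ⟨rfl, ?_⟩
  obtain ⟨x, y, t⟩ := v
  obtain ⟨x', y', t'⟩ := u
  fin_cases m' <;> cases t <;> cases t' <;> simp [edgesAt, nb] at h ⊢ <;> omega

/-- validity of a disagreement set, special index `i` -/
def PV (i j k : Fin 3) (D : Config) : Prop :=
  ∀ v, (D (edgesAt v i) = true → D (edgesAt v j) = true ∨ D (edgesAt v k) = true) ∧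
    (D (edgesAt v i) = false → ¬ (D (edgesAt v j) = true ∧ D (edgesAt v k) = true))

lemma PV.swap {i j k : Fin 3} {D : Config} (h : PV i j k D) : PV i k j D := fun v =>
  ⟨fun h1 => ((h v).1 h1).symm, fun h1 h2 => (h v).2 h1 h2.symm⟩

def inB (n : ℤ) (v : HexV) : Prop := |v.1| ≤ n ∧ |v.2.1| ≤ n

lemma inB_nb {n : ℤ} {v : HexV} (m : Fin 3) (h : inB n v) : inB (n + 1) (nb m v) := by
  obtain ⟨x, y, t⟩ := v
  simp only [inB, abs_le] at *
  fin_cases m <;> cases t <;> simp [nb] <;> omega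

lemma inB_mono {n n' : ℤ} {v : HexV} (hn : n ≤ n') (h : inB n v) : inB n' v :=
  ⟨h.1.trans hn, h.2.trans hn⟩

noncomputable def EB (n : ℤ) : Finset HexE := Finset.Icc (-n) n ×ˢ Finset.Icc (-n) n ×ˢ Finset.univ

lemma edge_EB {n : ℤ} {v : HexV} (m : Fin 3) (h : inB n v) : edgesAt v m ∈ EB (n + 1) := by
  obtain ⟨x, y, t⟩ := v
  simp only [inB, abs_le] at *
  fin_cases m <;> cases t <;> simp [edgesAt, EB] <;> omega

/-- removing an edge of special type -/
lemma PV.remove_i {i j k : Fin 3} (hij : i ≠ j) (hik : i ≠ k) {D : Config}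
    (h : PV i j k D) (v : HexV)
    (h1 : ¬ (D (edgesAt v j) = true ∧ D (edgesAt v k) = true))
    (h2 : ¬ (D (edgesAt (nb i v) j) = true ∧ D (edgesAt (nb i v) k) = true)) :
    PV i j k (Function.update D (edgesAt v i) false) := by
  intro u
  have hj : edgesAt u j ≠ edgesAt v i := fun e => hij (edgesAt_eq e).1.symm
  have hk : edgesAt u k ≠ edgesAt v i := fun e => hik (edgesAt_eq e).1.symm
  rw [Function.update_of_ne hj, Function.update_of_ne hk]
  by_cases hu : edgesAt u i = edgesAt v i
  · rw [hu, Function.update_self]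
    refine ⟨by simp, fun _ => ?_⟩
    rcases (edgesAt_eq hu).2 with rfl | rfl
    · exact h1
    · exact h2
  · rw [Function.update_of_ne hu]; exact h u

lemma PV.remove_j {i j k : Fin 3} (hij : i ≠ j) (hjk : j ≠ k) {D : Config}
    (h : PV i j k D) (v : HexV)
    (h1 : ¬ (D (edgesAt v i) = true ∧ D (edgesAt v k) = false))
    (h2 : ¬ (D (edgesAt (nb j v) i) = true ∧ D (edgesAt (nb j v) k) = false)) :
    PV i j k (Function.update D (edgesAt v j) false) := by
  intro u
  have hi : edgesAt u i ≠ edgesAt v j := fun e => hij (edgesAt_eq e).1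
  have hk : edgesAt u k ≠ edgesAt v j := fun e => hjk (edgesAt_eq e).1.symm
  rw [Function.update_of_ne hi, Function.update_of_ne hk]
  by_cases hu : edgesAt u j = edgesAt v j
  · rw [hu, Function.update_self]
    refine ⟨fun h3 => Or.inr ?_, by simp⟩
    rcases (edgesAt_eq hu).2 with rfl | rfl
    · simpa [h3] using h1
    · simpa [h3] using h2
  · rw [Function.update_of_ne hu]; exact h u

lemma exists_reduction {i j k : Fin 3} (hij : i ≠ j) (hik : i ≠ k) (hjk : j ≠ k) {D : Config}
    (h : PV i j k D) (n : ℤ) :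
    ∃ D' : Config, PV i j k D' ∧ (∀ e, D' e = true → D e = true) ∧
      (∀ e ∉ EB (n + 6), D' e = D e) ∧
      ∀ v, inB n v → D' (edgesAt v i) = false ∧ D' (edgesAt v j) = false ∧
        D' (edgesAt v k) = false := by
  let P : Set Config := {D' | PV i j k D' ∧ (∀ e, D' e = true → D e = true) ∧
      (∀ e ∉ EB (n + 6), D' e = D e)}
  let f : Config → ℕ := fun D' => ((EB (n + 6)).filter fun e => D' e = true).card
  obtain ⟨D', hD', hmin⟩ := (measure f).wf.has_min P ⟨D, h, fun _ => id, fun _ _ => rfl⟩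
  have key : ∀ e ∈ EB (n + 6), D' e = true → ¬ PV i j k (Function.update D' e false) := by
    intro e he hD'e hPV
    refine hmin (Function.update D' e false) ⟨hPV, ?_, ?_⟩ ?_
    · intro e' he'
      by_cases h' : e' = e
      · subst h'; simp at he'
      · rw [Function.update_of_ne h'] at he'; exact hD'.2.1 _ he'
    · intro e' he'
      have h' : e' ≠ e := fun h' => he' (h' ▸ he)
      rw [Function.update_of_ne h']; exact hD'.2.2 _ he'
    · change f _ < f _
      apply Finset.card_lt_card
      refine ⟨?_, ?_⟩
      · intro e' he'
        simp only [Finset.mem_filter] at he' ⊢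
        by_cases h' : e' = e
        · subst h'; simp at he'
        · rw [Function.update_of_ne h'] at he'; exact he'
      · intro hs
        have := hs (Finset.mem_filter.2 ⟨he, hD'e⟩)
        simp at this
  have hPV := hD'.1
  have f1 : ∀ v, inB (n + 5) v → D' (edgesAt v i) = true →
      (D' (edgesAt v j) = true ∧ D' (edgesAt v k) = true) ∨
      (D' (edgesAt (nb i v) j) = true ∧ D' (edgesAt (nb i v) k) = true) := by
    intro v hv hvi
    by_contra hcon
    push Not at hcon
    have he : edgesAt v i ∈ EB (n + 6) := by
      have := edge_EB i hv
      rwa [show n + 5 + 1 = n + 6 by ring] at this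
    exact key _ he hvi (hPV.remove_i hij hik v (fun h => hcon.1 h.1 h.2) (fun h => hcon.2 h.1 h.2))
  have f2 : ∀ v, inB (n + 5) v → D' (edgesAt v j) = true →
      (D' (edgesAt v i) = true ∧ D' (edgesAt v k) = false) ∨
      (D' (edgesAt (nb j v) i) = true ∧ D' (edgesAt (nb j v) k) = false) := by
    intro v hv hvi
    by_contra hcon
    rw [not_or] at hcon
    have he : edgesAt v j ∈ EB (n + 6) := by
      have := edge_EB j hv
      rwa [show n + 5 + 1 = n + 6 by ring] at this
    exact key _ he hvi (hPV.remove_j hij hjk v hcon.1 hcon.2)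
  have f3 : ∀ v, inB (n + 5) v → D' (edgesAt v k) = true →
      (D' (edgesAt v i) = true ∧ D' (edgesAt v j) = false) ∨
      (D' (edgesAt (nb k v) i) = true ∧ D' (edgesAt (nb k v) j) = false) := by
    intro v hv hvi
    by_contra hcon
    rw [not_or] at hcon
    have he : edgesAt v k ∈ EB (n + 6) := by
      have := edge_EB k hv
      rwa [show n + 5 + 1 = n + 6 by ring] at this
    exact key _ he hvi (hPV.swap.remove_j hik hjk.symm v hcon.1 hcon.2).swap
  have f4 : ∀ v, inB (n + 2) v → D' (edgesAt v i) = true →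
      ¬ (D' (edgesAt v j) = true ∧ D' (edgesAt v k) = true) := by
    rintro v hv hvi ⟨hvj, hvk⟩
    have b1 := inB_nb j hv
    have b2 := inB_nb k hv
    have b3 := inB_nb i b1
    have b4 := inB_nb i b2
    have g1 := f2 v (inB_mono (by linarith) hv) hvj
    have g2 := f3 v (inB_mono (by linarith) hv) hvk
    simp only [hvi, hvj, hvk, Bool.true_eq_false, and_false, false_or] at g1 g2
    have g3 := f1 _ (inB_mono (by linarith) b1) g1.1
    have g4 := f1 _ (inB_mono (by linarith) b2) g2.1
    simp only [g1.2, g2.2, Bool.false_eq_true, and_false, false_and, false_or] at g3 g4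
    have g5 := f3 _ (inB_mono (by linarith) b3) g3.2
    rw [nb_hex i j k hij hik hjk] at g5
    have g6 : D' (edgesAt (nb j (nb i (nb k v))) j) = true := by
      rw [edgesAt_nb]; exact g4.1
    simp [g3.1, g6] at g5
  have f5 : ∀ v, inB (n + 1) v → D' (edgesAt v i) = false := by
    intro v hv
    by_contra hcon
    simp only [Bool.not_eq_false] at hcon
    rcases f1 v (inB_mono (by linarith) hv) hcon with h1 | h1
    · exact f4 v (inB_mono (by linarith) hv) hcon h1
    · refine f4 (nb i v) (inB_mono (by linarith) (inB_nb i hv)) ?_ h1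
      rw [edgesAt_nb]; exact hcon
  refine ⟨D', hD'.1, hD'.2.1, hD'.2.2, fun v hv => ⟨f5 v (inB_mono (by linarith) hv), ?_, ?_⟩⟩
  · by_contra hcon
    simp only [Bool.not_eq_false] at hcon
    have := f2 v (inB_mono (by linarith) hv) hcon
    simp [f5 v (inB_mono (by linarith) hv), f5 _ (inB_nb j hv)] at this
  · by_contra hcon
    simp only [Bool.not_eq_false] at hcon
    have := f3 v (inB_mono (by linarith) hv) hcon
    simp [f5 v (inB_mono (by linarith) hv), f5 _ (inB_nb k hv)] at this

lemma valid_iff (τ : Fin 3 → Bool) (hτ : validConf τ) :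
    ∃ i j k : Fin 3, i ≠ j ∧ i ≠ k ∧ j ≠ k ∧ ∀ f : Fin 3 → Bool,
      ((1 ≤ (Finset.univ.filter fun m : Fin 3 => f m = true).card ∧
        (Finset.univ.filter fun m : Fin 3 => f m = true).card ≤ 2) ↔
      ((xor (f i) (τ i) = true → xor (f j) (τ j) = true ∨ xor (f k) (τ k) = true) ∧
       (xor (f i) (τ i) = false → ¬ (xor (f j) (τ j) = true ∧ xor (f k) (τ k) = true)))) := by
  unfold validConf at hτ
  revert τ
  decide

lemma exists_good (τ : Fin 3 → Bool) (hτ : validConf τ) (ω : Config) (hω : IsConfig ω) (n : ℤ) :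
    ∃ ω' : Config, IsConfig ω' ∧ (∀ e ∉ EB (n + 6), ω' e = ω e) ∧
      confSet ω τ ⊆ confSet ω' τ ∧ ∀ v, inB n v → v ∈ confSet ω' τ := by
  obtain ⟨i, j, k, hij, hik, hjk, H⟩ := valid_iff τ hτ
  have hPV : PV i j k (fun e => xor (ω e) (τ e.2.2)) := by
    intro v
    have := (H (localConf ω v)).1 (hω v)
    simpa only [edgesAt_snd, localConf] using this
  obtain ⟨D', h1, h2, h3, h4⟩ := exists_reduction hij hik hjk hPV n
  refine ⟨fun e => xor (D' e) (τ e.2.2), ?_, ?_, ?_, ?_⟩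
  · intro v
    apply (H _).2
    have := h1 v
    simpa only [localConf, edgesAt_snd, Bool.xor_assoc, Bool.xor_self, Bool.xor_false] using this
  · intro e he
    simp only [h3 e he, Bool.xor_assoc, Bool.xor_self, Bool.xor_false]
  · intro v hv
    simp only [confSet, Set.mem_ofPred_eq] at *
    funext m
    have hm : ω (edgesAt v m) = τ m := congrFun hv m
    have : D' (edgesAt v m) = false := by
      by_contra hcon
      simp only [Bool.not_eq_false] at hcon
      have := h2 _ hcon
      simp [hm, edgesAt_snd] at this
    simp [localConf, this, edgesAt_snd]
  · intro v hv
    simp only [confSet, Set.mem_ofPred_eq]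
    funext m
    have hm : m = i ∨ m = j ∨ m = k := by omega
    obtain ⟨q1, q2, q3⟩ := h4 v hv
    rcases hm with rfl | rfl | rfl <;> simp [localConf, edgesAt_snd, *]


def InfComps (S : Set HexV) : Set (Set HexV) := {C | IsCompOf S C ∧ C.Infinite}

lemma HexAdj.symm {v w : HexV} (h : HexAdj v w) : HexAdj w v := by
  obtain ⟨h1, e, h2, h3⟩ := h
  exact ⟨h1.symm, e, h3, h2⟩

lemma adjIn.symm {S : Set HexV} {v w : HexV} (h : adjIn S v w) : adjIn S w v :=
  ⟨h.1.symm, h.2.2, h.2.1⟩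

lemma rtg_symm {S : Set HexV} {v w : HexV} (h : Relation.ReflTransGen (adjIn S) v w) :
    Relation.ReflTransGen (adjIn S) w v := by
  induction h with
  | refl => exact .refl
  | tail _ h ih => exact .head h.symm ih

lemma compOf_eq {S : Set HexV} {v w : HexV} (h : w ∈ compOf S v) : compOf S w = compOf S v := by
  ext u
  exact ⟨fun hu => Relation.ReflTransGen.trans h hu,
    fun hu => Relation.ReflTransGen.trans (rtg_symm h) hu⟩

lemma self_mem_compOf (S : Set HexV) (v : HexV) : v ∈ compOf S v := Relation.ReflTransGen.refl

lemma compOf_mono {S T : Set HexV} (h : S ⊆ T) (v : HexV) : compOf S v ⊆ compOf T v := by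
  intro w hw
  induction hw with
  | refl => exact .refl
  | tail _ hab ih => exact Relation.ReflTransGen.tail ih ⟨hab.1, h hab.2.1, h hab.2.2⟩

lemma mem_of_infinite {S : Set HexV} {v : HexV} (h : (compOf S v).Infinite) : v ∈ S := by
  by_contra hv
  apply h
  refine (Set.finite_singleton v).subset ?_
  intro w hw
  rcases Relation.ReflTransGen.cases_head hw with h | ⟨u, h, _⟩
  · exact h.symm
  · exact absurd h.2.1 hv

lemma adj_nb {v w : HexV} (h : HexAdj v w) : ∃ m, w = nb m v := by
  obtain ⟨h0, ⟨x, y, k⟩, h1, h2⟩ := h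
  refine ⟨k, ?_⟩
  fin_cases k <;> simp [end1, end2] at h1 h2 <;> rcases h1 with rfl | rfl <;>
    rcases h2 with rfl | rfl <;> simp [nb] at h0 ⊢

lemma nb_adj (v : HexV) (m : Fin 3) : HexAdj v (nb m v) := by
  obtain ⟨x, y, t⟩ := v
  refine ⟨?_, edgesAt (x, y, t) m, ?_, ?_⟩ <;>
  fin_cases m <;> cases t <;> simp [nb, end1, end2, edgesAt]

lemma adj_finite (v : HexV) : {w | HexAdj v w}.Finite := by
  refine (Set.finite_range (fun m => nb m v)).subset ?_
  intro w hw
  obtain ⟨m, rfl⟩ := adj_nb hw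
  exact ⟨m, rfl⟩

lemma exists_inf_sub {S T : Set HexV} (h : S ⊆ T) (hfin : (T \ S).Finite) {v : HexV}
    (hv : (compOf T v).Infinite) :
    ∃ q, (compOf S q).Infinite ∧ compOf T q = compOf T v := by
  let Q : Set HexV := {v} ∪ ⋃ p ∈ T \ S, {w | HexAdj p w}
  have hQ : Q.Finite := (Set.finite_singleton v).union (hfin.biUnion fun p _ => adj_finite p)
  have hcov : ∀ w ∈ compOf T v, w ∈ T \ S ∨ ∃ q ∈ Q, w ∈ compOf S q := by
    intro w hw
    induction hw with
    | refl => exact Or.inr ⟨v, Or.inl rfl, self_mem_compOf _ _⟩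
    | @tail w w' _ hadj ih =>
      by_cases hw' : w' ∈ S
      · right
        by_cases hwS : w ∈ S
        · rcases ih with h1 | ⟨q, hq, h1⟩
          · exact absurd hwS h1.2
          · exact ⟨q, hq, Relation.ReflTransGen.tail h1 ⟨hadj.1, hwS, hw'⟩⟩
        · exact ⟨w', Or.inr (Set.mem_biUnion (⟨hadj.2.1, hwS⟩ : w ∈ T \ S) hadj.1), self_mem_compOf _ _⟩
      · exact Or.inl ⟨hadj.2.2, hw'⟩
  by_contra hcon
  push Not at hcon
  apply hv
  refine ((hfin.union (hQ.biUnion (t := fun q => compOf T v ∩ compOf S q) ?_))).subset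
    (fun w hw => ?_)
  · intro q hq
    by_cases hi : (compOf S q).Infinite
    · have hne := hcon q hi
      convert Set.finite_empty
      rw [Set.eq_empty_iff_forall_notMem]
      rintro w ⟨h1, h2⟩
      exact hne (by rw [← compOf_eq (compOf_mono h q h2), compOf_eq h1])
    · exact (Set.not_infinite.1 hi).subset Set.inter_subset_right
  · rcases hcov w hw with h1 | ⟨q, hq, h1⟩
    · exact Or.inl h1
    · exact Or.inr (Set.mem_biUnion hq ⟨hw, h1⟩)

lemma encard_ne {S T : Set HexV} (h : S ⊆ T) (hfin : (T \ S).Finite) {v w : HexV}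
    (hv : (compOf S v).Infinite) (hw : (compOf S w).Infinite) (hne : compOf S v ≠ compOf S w)
    (heq : compOf T v = compOf T w) (k : ℕ) (hk : (InfComps S).encard = k) :
    (InfComps T).encard ≠ k := by
  classical
  let φ : Set HexV → Set HexV := fun C => {u | ∃ c ∈ C, u ∈ compOf T c}
  have hφ : ∀ q, φ (compOf S q) = compOf T q := by
    intro q
    ext u
    constructor
    · rintro ⟨c, hc, hu⟩
      rw [← compOf_eq (compOf_mono h q hc)]; exact hu
    · exact fun hu => ⟨q, self_mem_compOf _ _, hu⟩
  have himg : InfComps T = φ '' InfComps S := by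
    ext C
    constructor
    · rintro ⟨⟨u, hu, rfl⟩, hinf⟩
      obtain ⟨q, hq, hqe⟩ := exists_inf_sub h hfin hinf
      exact ⟨compOf S q, ⟨⟨q, mem_of_infinite hq, rfl⟩, hq⟩, by rw [hφ, hqe]⟩
    · rintro ⟨_, ⟨⟨u, hu, rfl⟩, hinf⟩, rfl⟩
      rw [hφ]
      exact ⟨⟨u, h hu, rfl⟩, hinf.mono (compOf_mono h u)⟩
  intro hT
  have hSf : (InfComps S).Finite := Set.finite_of_encard_eq_coe hk
  have hinj := hSf.injOn_of_encard_image_eq (f := φ) (by rw [← himg, hT, hk])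
  exact hne (hinj ⟨⟨v, mem_of_infinite hv, rfl⟩, hv⟩ ⟨⟨w, mem_of_infinite hw, rfl⟩, hw⟩
    (by rw [hφ, hφ, heq]))

lemma conn_x (x y : ℤ) : Relation.ReflTransGen HexAdj (0, y, false) (x, y, false) := by
  have step : ∀ x : ℤ, Relation.ReflTransGen HexAdj (x, y, false) (x + 1, y, false) := fun x =>
    .head (by simpa [nb] using nb_adj (x, y, false) 0)
      (.single (by simpa [nb] using nb_adj (x, y, true) 1))
  have step' : ∀ x : ℤ, Relation.ReflTransGen HexAdj (x, y, false) (x - 1, y, false) := fun x =>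
    .head (by simpa [nb] using nb_adj (x, y, false) 1)
      (.single (by simpa [nb] using nb_adj (x - 1, y, true) 0))
  induction x using Int.induction_on with
  | zero => exact .refl
  | succ i ih => exact ih.trans (step _)
  | pred i ih => exact ih.trans (step' _)

lemma conn_y (y : ℤ) : Relation.ReflTransGen HexAdj (0, 0, false) (0, y, false) := by
  have step : ∀ y : ℤ, Relation.ReflTransGen HexAdj (0, y, false) (0, y + 1, false) := fun y =>
    .head (by simpa [nb] using nb_adj (0, y, false) 0)
      (.single (by simpa [nb] using nb_adj (0, y, true) 2))
  have step' : ∀ y : ℤ, Relation.ReflTransGen HexAdj (0, y, false) (0, y - 1, false) := fun y =>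
    .head (by simpa [nb] using nb_adj (0, y, false) 2)
      (.single (by simpa [nb] using nb_adj (0, y - 1, true) 0))
  induction y using Int.induction_on with
  | zero => exact .refl
  | succ i ih => exact ih.trans (step _)
  | pred i ih => exact ih.trans (step' _)

lemma conn (v : HexV) : Relation.ReflTransGen HexAdj (0, 0, false) v := by
  obtain ⟨x, y, t⟩ := v
  have h := (conn_y y).trans (conn_x x y)
  cases t
  · exact h
  · exact h.tail (by simpa [nb] using nb_adj (x, y, false) 0)

lemma conn_box (v : HexV) : ∃ n : ℤ, ∀ S : Set HexV, (∀ u, inB n u → u ∈ S) →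
    (0, 0, false) ∈ compOf S v := by
  have hb : ∀ u : HexV, inB (|u.1| + |u.2.1|) u := fun u =>
    ⟨by linarith [abs_nonneg u.2.1], by linarith [abs_nonneg u.1]⟩
  have h := conn v
  induction h with
  | refl => exact ⟨0, fun S _ => self_mem_compOf _ _⟩
  | @tail w w' _ hadj ih =>
    obtain ⟨n, hn⟩ := ih
    refine ⟨max n (max (|w.1| + |w.2.1|) (|w'.1| + |w'.2.1|)), fun S hS => ?_⟩
    refine Relation.ReflTransGen.head ⟨hadj.symm, hS _ ?_, hS _ ?_⟩
      (hn S fun u hu => hS u (inB_mono (le_max_left _ _) hu))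
    · exact inB_mono ((le_max_right _ _).trans (le_max_right _ _)) (hb _)
    · exact inB_mono ((le_max_left _ _).trans (le_max_right _ _)) (hb _)

/-- Deterministic part: from `k ≥ 2` infinite clusters, a finite change gives another number. -/
lemma exists_change (τ : Fin 3 → Bool) (hτ : validConf τ) (ω : Config) (hω : IsConfig ω)
    (k : ℕ) (hk : 1 < k) (hN : numInfClusters ω τ = k) :
    ∃ G : Finset HexE, ∃ ω' : Config, IsConfig ω' ∧ (∀ e, ω' e ≠ ω e ↔ e ∈ G) ∧
      numInfClusters ω' τ ≠ k := by
  classical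
  have h1 : 1 < (InfComps (confSet ω τ)).encard := by
    change 1 < numInfClusters ω τ
    rw [hN]; exact_mod_cast hk
  obtain ⟨C₁, C₂, ⟨⟨v, hv, rfl⟩, hvi⟩, ⟨⟨w, hw, rfl⟩, hwi⟩, hne⟩ := Set.one_lt_encard_iff.1 h1
  obtain ⟨n, hn⟩ := conn_box v
  obtain ⟨n', hn'⟩ := conn_box w
  obtain ⟨ω', hω', hout, hsub, hin⟩ := exists_good τ hτ ω hω (max n n')
  refine ⟨(EB (max n n' + 6)).filter fun e => ω' e ≠ ω e, ω', hω', ?_, ?_⟩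
  · intro e
    simp only [Finset.mem_filter]
    constructor
    · intro h
      refine ⟨?_, h⟩
      by_contra h'
      exact h (hout e h')
    · exact fun h => h.2
  · refine encard_ne hsub ?_ hvi hwi hne ?_ k hN
    · refine (((EB (max n n' + 6)).image end1 ∪ (EB (max n n' + 6)).image end2).finite_toSet).subset ?_
      rintro u ⟨hu1, hu2⟩
      by_contra hcon
      apply hu2
      simp only [Finset.coe_union, Finset.coe_image, Set.mem_union, Set.mem_image,
        Finset.mem_coe, not_or, not_exists, not_and] at hcon
      simp only [confSet, Set.mem_ofPred_eq] at hu1 ⊢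
      rw [← hu1]
      funext m
      refine (hout _ fun hm => ?_).symm
      have : end1 (edgesAt u m) = u ∨ end2 (edgesAt u m) = u := by
        obtain ⟨x, y, t⟩ := u
        fin_cases m <;> cases t <;> simp [edgesAt, end1, end2]
      rcases this with h | h
      · exact hcon.1 _ hm h
      · exact hcon.2 _ hm h
    · rw [← compOf_eq (hn _ fun u hu => hin u (inB_mono (le_max_left _ _) hu)),
        ← compOf_eq (hn' _ fun u hu => hin u (inB_mono (le_max_right _ _) hu))]


def reachN (S : Set HexV) (v : HexV) : ℕ → HexV → Prop
  | 0, w => v = w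
  | n + 1, w => ∃ u, reachN S v n u ∧ adjIn S u w

lemma mem_compOf_iff (S : Set HexV) (v w : HexV) : w ∈ compOf S v ↔ ∃ n, reachN S v n w := by
  constructor
  · intro h
    induction h with
    | refl => exact ⟨0, rfl⟩
    | tail _ h ih =>
      obtain ⟨n, hn⟩ := ih
      exact ⟨n + 1, _, hn, h⟩
  · rintro ⟨n, hn⟩
    induction n generalizing w with
    | zero => cases hn; exact self_mem_compOf _ _
    | succ n ih =>
      obtain ⟨u, hu, ha⟩ := hn
      exact Relation.ReflTransGen.tail (ih u hu) ha

lemma meas_conf (τ : Fin 3 → Bool) (v : HexV) :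
    MeasurableSet {ω : Config | v ∈ confSet ω τ} := by
  have hm : Measurable fun ω : Config => localConf ω v :=
    measurable_pi_lambda _ fun i => measurable_pi_apply _
  exact hm (measurableSet_singleton τ)

lemma meas_IsConfig : MeasurableSet {ω : Config | IsConfig ω} := by
  have : {ω : Config | IsConfig ω} = ⋂ v : HexV, (fun ω : Config => localConf ω v) ⁻¹'
      {f | 1 ≤ (Finset.univ.filter fun i : Fin 3 => f i = true).card ∧
        (Finset.univ.filter fun i : Fin 3 => f i = true).card ≤ 2} := by
    ext ω; simp [IsConfig]
  rw [this]
  refine MeasurableSet.iInter fun v => ?_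
  have hm : Measurable fun ω : Config => localConf ω v :=
    measurable_pi_lambda _ fun i => measurable_pi_apply _
  exact hm (Set.toFinite _).measurableSet

lemma meas_reach (τ : Fin 3 → Bool) (v : HexV) (n : ℕ) (w : HexV) :
    MeasurableSet {ω : Config | reachN (confSet ω τ) v n w} := by
  induction n generalizing w with
  | zero => exact MeasurableSet.const _
  | succ n ih =>
    have : {ω : Config | reachN (confSet ω τ) v (n + 1) w} =
        ⋃ u, ({ω : Config | reachN (confSet ω τ) v n u} ∩ ({ω : Config | HexAdj u w} ∩
          ({ω : Config | u ∈ confSet ω τ} ∩ {ω : Config | w ∈ confSet ω τ}))) := by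
      ext ω; simp [reachN, adjIn]
    rw [this]
    exact MeasurableSet.iUnion fun u => (ih u).inter ((MeasurableSet.const _).inter
      ((meas_conf τ u).inter (meas_conf τ w)))

lemma meas_comp (τ : Fin 3 → Bool) (v w : HexV) :
    MeasurableSet {ω : Config | w ∈ compOf (confSet ω τ) v} := by
  simp only [mem_compOf_iff]
  have : {ω : Config | ∃ n, reachN (confSet ω τ) v n w} =
      ⋃ n, {ω : Config | reachN (confSet ω τ) v n w} := by ext; simp
  rw [this]
  exact MeasurableSet.iUnion fun n => meas_reach τ v n w

lemma meas_inf (τ : Fin 3 → Bool) (v : HexV) :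
    MeasurableSet {ω : Config | (compOf (confSet ω τ) v).Infinite} := by
  have : {ω : Config | (compOf (confSet ω τ) v).Infinite} =
      ⋂ s : Finset HexV, ⋃ w : HexV, ({ω : Config | w ∉ s} ∩
        {ω : Config | w ∈ compOf (confSet ω τ) v}) := by
    ext ω
    simp only [Set.mem_ofPred_eq, Set.mem_iInter, Set.mem_iUnion, Set.mem_inter_iff]
    constructor
    · intro h s
      obtain ⟨w, h1, h2⟩ := h.exists_notMem_finset s
      exact ⟨w, h2, h1⟩
    · intro h hf
      obtain ⟨w, h1, h2⟩ := h hf.toFinset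
      exact h1 (hf.mem_toFinset.2 h2)
  rw [this]
  exact MeasurableSet.iInter fun s => MeasurableSet.iUnion fun w =>
    (MeasurableSet.const _).inter (meas_comp τ v w)

lemma le_encard_iff (S : Set HexV) (j : ℕ) : (j : ℕ∞) ≤ (InfComps S).encard ↔
    ∃ t : Fin j → HexV, (∀ i, (compOf S (t i)).Infinite) ∧
      ∀ i i', i ≠ i' → t i' ∉ compOf S (t i) := by
  constructor
  · intro h
    obtain ⟨T, hT, hc⟩ := Set.exists_subset_encard_eq h
    have hfin : T.Finite := Set.finite_of_encard_eq_coe hc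
    have hcard : hfin.toFinset.card = j := by
      rw [hfin.encard_eq_coe_toFinset_card] at hc
      exact_mod_cast hc
    let e := (hfin.toFinset.equivFinOfCardEq hcard).symm
    have hmem : ∀ i, ((e i : Set HexV)) ∈ InfComps S := fun i =>
      hT (hfin.mem_toFinset.1 (e i).2)
    choose t ht using fun i => (hmem i).1
    refine ⟨t, fun i => ?_, fun i i' hne hmem' => hne ?_⟩
    · rw [← (ht i).2]; exact (hmem i).2
    · have := compOf_eq hmem'
      rw [← (ht i).2, ← (ht i').2] at this
      exact (e.injective (Subtype.ext this)).symm
  · rintro ⟨t, h1, h2⟩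
    have hinj : Function.Injective fun i => compOf S (t i) := by
      intro i i' he
      by_contra hne
      refine h2 i i' hne ?_
      simp only at he
      rw [he]; exact self_mem_compOf _ _
    calc (j : ℕ∞) = (Set.range fun i => compOf S (t i)).encard := by
          rw [← Set.image_univ, hinj.encard_image]; simp
      _ ≤ _ := by
          apply Set.encard_le_encard
          rintro _ ⟨i, rfl⟩
          exact ⟨⟨t i, mem_of_infinite (h1 i), rfl⟩, h1 i⟩

lemma meas_ge (τ : Fin 3 → Bool) (j : ℕ) :
    MeasurableSet {ω : Config | (j : ℕ∞) ≤ numInfClusters ω τ} := by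
  have : {ω : Config | (j : ℕ∞) ≤ numInfClusters ω τ} =
      ⋃ t : Fin j → HexV, ((⋂ i, {ω : Config | (compOf (confSet ω τ) (t i)).Infinite}) ∩
        ⋂ i, ⋂ i', ({ω : Config | ¬ i ≠ i'} ∪ {ω : Config | t i' ∈ compOf (confSet ω τ) (t i)}ᶜ)) := by
    ext ω
    refine (le_encard_iff (confSet ω τ) j).trans ?_
    simp [imp_iff_not_or]
  rw [this]
  exact MeasurableSet.iUnion fun t => (MeasurableSet.iInter fun i => meas_inf τ _).inter
    (MeasurableSet.iInter fun i => MeasurableSet.iInter fun i' =>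
      (MeasurableSet.const _).union (meas_comp τ _ _).compl)

lemma meas_eq (τ : Fin 3 → Bool) (k : ℕ) :
    MeasurableSet {ω : Config | numInfClusters ω τ = (k : ℕ∞)} := by
  have : {ω : Config | numInfClusters ω τ = (k : ℕ∞)} =
      {ω : Config | (k : ℕ∞) ≤ numInfClusters ω τ} \
      {ω : Config | ((k + 1 : ℕ) : ℕ∞) ≤ numInfClusters ω τ} := by
    ext ω
    simp only [Set.mem_ofPred_eq, Set.mem_sdiff]
    generalize numInfClusters ω τ = N
    cases N using ENat.recTopCoe with
    | top => simp
    | coe n =>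
      norm_cast
      omega
  rw [this]
  exact (meas_ge τ k).diff (meas_ge τ (k + 1))

/-! shift invariance -/

def shV (g : ℤ × ℤ) : HexV ≃ HexV where
  toFun v := (v.1 + g.1, v.2.1 + g.2, v.2.2)
  invFun v := (v.1 - g.1, v.2.1 - g.2, v.2.2)
  left_inv v := by simp
  right_inv v := by simp

lemma shV_nb (g : ℤ × ℤ) (m : Fin 3) (v : HexV) : shV g (nb m v) = nb m (shV g v) := by
  obtain ⟨x, y, t⟩ := v
  fin_cases m <;> cases t <;> simp [nb, shV] <;> ring

lemma shV_edges (g : ℤ × ℤ) (m : Fin 3) (v : HexV) :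
    shiftE g (edgesAt v m) = edgesAt (shV g v) m := by
  obtain ⟨x, y, t⟩ := v
  fin_cases m <;> cases t <;> simp [edgesAt, shV, shiftE] <;> ring

lemma shV_adj (g : ℤ × ℤ) (v w : HexV) : HexAdj (shV g v) (shV g w) ↔ HexAdj v w := by
  constructor
  · intro h
    obtain ⟨m, hm⟩ := adj_nb h
    rw [← shV_nb] at hm
    rw [(shV g).injective hm]; exact nb_adj _ _
  · intro h
    obtain ⟨m, rfl⟩ := adj_nb h
    rw [shV_nb]; exact nb_adj _ _

lemma confSet_shift (g : ℤ × ℤ) (ω : Config) (τ : Fin 3 → Bool) :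
    confSet (shiftConfig g ω) τ = shV g ⁻¹' confSet ω τ := by
  ext v
  have : localConf (shiftConfig g ω) v = localConf ω (shV g v) := by
    funext m; simp [localConf, shiftConfig, shV_edges]
  simp [confSet, this]

lemma compOf_shift (g : ℤ × ℤ) (S : Set HexV) (v : HexV) :
    compOf (shV g ⁻¹' S) v = shV g ⁻¹' compOf S (shV g v) := by
  ext w
  constructor
  · intro h
    induction h with
    | refl => exact .refl
    | tail _ hab ih =>
      exact Relation.ReflTransGen.tail ih ⟨(shV_adj g _ _).2 hab.1, hab.2.1, hab.2.2⟩
  · intro h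
    have key : ∀ u, u ∈ compOf S (shV g v) → (shV g).symm u ∈ compOf (shV g ⁻¹' S) v := by
      intro u hu
      induction hu with
      | refl => rw [Equiv.symm_apply_apply]; exact .refl
      | tail _ hab ih =>
        exact Relation.ReflTransGen.tail ih ⟨(shV_adj g _ _).1 (by simpa using hab.1),
          by simpa using hab.2.1, by simpa using hab.2.2⟩
    simpa using key _ h

lemma num_shift (g : ℤ × ℤ) (ω : Config) (τ : Fin 3 → Bool) :
    numInfClusters (shiftConfig g ω) τ = numInfClusters ω τ := by
  change (InfComps (confSet (shiftConfig g ω) τ)).encard = (InfComps (confSet ω τ)).encard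
  rw [confSet_shift]
  have : InfComps (shV g ⁻¹' confSet ω τ) = (fun C => shV g ⁻¹' C) '' InfComps (confSet ω τ) := by
    ext C
    constructor
    · rintro ⟨⟨v, hv, rfl⟩, hi⟩
      rw [compOf_shift] at *
      refine ⟨_, ⟨⟨shV g v, hv, rfl⟩, ?_⟩, rfl⟩
      intro hf
      exact hi (hf.preimage (shV g).injective.injOn)
    · rintro ⟨_, ⟨⟨v, hv, rfl⟩, hi⟩, rfl⟩
      refine ⟨⟨(shV g).symm v, by simpa using hv, by rw [compOf_shift]; simp⟩, ?_⟩
      exact hi.preimage (by simp)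
  rw [this, Function.Injective.encard_image]
  exact (shV g).surjective.preimage_injective


def flipG (G : Finset HexE) (ω : Config) : Config := fun e => if e ∈ G then !(ω e) else ω e

lemma flipG_flipG (G : Finset HexE) (ω : Config) : flipG G (flipG G ω) = ω := by
  funext e; by_cases h : e ∈ G <;> simp [flipG, h]

lemma meas_flipG (G : Finset HexE) : Measurable (flipG G) := by
  refine measurable_pi_lambda _ fun e => ?_
  by_cases h : e ∈ G
  · simp only [flipG, h, if_true]
    exact (measurable_of_finite Bool.not).comp (measurable_pi_apply e)
  · simp only [flipG, h, if_false]
    exact measurable_pi_apply e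

lemma weight_bd (a b c : ℝ) (ha : 0 < a) (hb : 0 < b) (hc : 0 < c) (f : Fin 3 → Bool)
    (hf : 1 ≤ (Finset.univ.filter fun i : Fin 3 => f i = true).card ∧
      (Finset.univ.filter fun i : Fin 3 => f i = true).card ≤ 2) :
    min a (min b c) ≤ weight a b c f ∧ weight a b c f ≤ max a (max b c) := by
  have hv : ¬ (f 2 = false ∧ f 1 = false ∧ f 0 = false) ∧
      ¬ (f 2 = true ∧ f 1 = true ∧ f 0 = true) := by
    revert f; decide
  unfold weight
  rcases h2 : f 2 <;> rcases h1 : f 1 <;> rcases h0 : f 0 <;> simp [h0, h1, h2] at hv ⊢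

lemma edge_verts {G : Finset HexE} {v : HexV} {m : Fin 3} (h : edgesAt v m ∈ G) : v ∈ verts G := by
  refine Finset.mem_biUnion.2 ⟨_, h, ?_⟩
  obtain ⟨x, y, t⟩ := v
  fin_cases m <;> cases t <;> simp [edgesAt, end1, end2, endsFinset]

lemma cyl_ineq (a b c : ℝ) (ha : 0 < a) (hb : 0 < b) (hc : 0 < c)
    (μ : Measure Config) (hGibbs : IsGibbs a b c μ) (G : Finset HexE) :
    ∃ K : ENNReal, K ≠ ⊤ ∧ ∀ F : Finset HexE, G ⊆ F → ∀ σ, IsConfig σ → IsConfig (flipG G σ) →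
      μ (cyl (↑F ∪ edgeNbhd F) σ) ≤ K * μ (cyl (↑F ∪ edgeNbhd F) (flipG G σ)) := by
  set mn := min a (min b c) with hmn
  set mx := max a (max b c) with hmx
  have hmn0 : 0 < mn := by simp [hmn, ha, hb, hc]
  have hmx0 : 0 < mx := by simp [hmx, ha]
  refine ⟨ENNReal.ofReal ((mx / mn) ^ (verts G).card), ENNReal.ofReal_ne_top, ?_⟩
  intro F hGF σ hσ hτ
  set τ := flipG G σ with hτdef
  have hG := hGibbs.2.2 F σ τ hσ hτ (by
    intro e he
    have : e ∉ G := fun h => he (hGF h)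
    simp [hτdef, flipG, this])
  have hpos : ∀ ω, IsConfig ω → ∀ v, 0 < weight a b c (localConf ω v) := fun ω hω v =>
    hmn0.trans_le (weight_bd a b c ha hb hc _ (hω v)).1
  have hWτ : 0 < ∏ v ∈ verts F, weight a b c (localConf τ v) :=
    Finset.prod_pos fun v _ => hpos τ hτ v
  have hsub : verts G ⊆ verts F := Finset.biUnion_subset_biUnion_of_subset_left _ hGF
  have hW : ∏ v ∈ verts F, weight a b c (localConf σ v) ≤
      (mx / mn) ^ (verts G).card * ∏ v ∈ verts F, weight a b c (localConf τ v) := by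
    rw [← Finset.prod_sdiff hsub, ← Finset.prod_sdiff hsub]
    have heq : ∏ v ∈ verts F \ verts G, weight a b c (localConf τ v) =
        ∏ v ∈ verts F \ verts G, weight a b c (localConf σ v) := by
      refine Finset.prod_congr rfl fun v hv => ?_
      congr 1
      funext m
      have : edgesAt v m ∉ G := fun h => (Finset.mem_sdiff.1 hv).2 (edge_verts h)
      simp [localConf, hτdef, flipG, this]
    rw [heq]
    have h1 : ∏ v ∈ verts G, weight a b c (localConf σ v) ≤
        (mx / mn) ^ (verts G).card * ∏ v ∈ verts G, weight a b c (localConf τ v) := by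
      rw [← Finset.prod_const, ← Finset.prod_mul_distrib]
      refine Finset.prod_le_prod (fun v _ => (hpos σ hσ v).le) fun v _ => ?_
      calc weight a b c (localConf σ v) ≤ mx := (weight_bd a b c ha hb hc _ (hσ v)).2
        _ = mx / mn * mn := by field_simp
        _ ≤ _ := by
          gcongr
          exact (weight_bd a b c ha hb hc _ (hτ v)).1
    have h2 : 0 ≤ ∏ v ∈ verts F \ verts G, weight a b c (localConf σ v) :=
      Finset.prod_nonneg fun v _ => (hpos σ hσ v).le
    calc _ ≤ _ := mul_le_mul_of_nonneg_left h1 h2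
      _ = _ := by ring
  have h3 := ENNReal.ofReal_le_ofReal hW
  rw [ENNReal.ofReal_mul (by positivity)] at h3
  have hA0 : ENNReal.ofReal (∏ v ∈ verts F, weight a b c (localConf τ v)) ≠ 0 := by
    simpa using hWτ
  refine (ENNReal.mul_le_mul_iff_left hA0 ENNReal.ofReal_ne_top).1 ?_
  rw [hG]
  calc _ ≤ _ := mul_le_mul_right h3 _
    _ = _ := by ring

lemma edgeNbhd_finite (F : Finset HexE) : (edgeNbhd F).Finite := by
  have hfin : ∀ v : HexV, {e' | v = end1 e' ∨ v = end2 e'}.Finite := by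
    intro v
    refine (Set.finite_range (edgesAt v)).subset ?_
    rintro ⟨x, y, m⟩ h
    refine ⟨m, ?_⟩
    fin_cases m <;> rcases h with rfl | rfl <;> simp [edgesAt, end1, end2]
  refine (F.finite_toSet.biUnion fun e _ => (hfin (end1 e)).union (hfin (end2 e))).subset ?_
  rintro e' ⟨e, he, h⟩
  refine Set.mem_biUnion he ?_
  rcases h with h | h | h | h
  · exact Or.inl (Or.inl h)
  · exact Or.inl (Or.inr h)
  · exact Or.inr (Or.inl h)
  · exact Or.inr (Or.inr h)

lemma flip_null (a b c : ℝ) (ha : 0 < a) (hb : 0 < b) (hc : 0 < c)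
    (μ : Measure Config) (hGibbs : IsGibbs a b c μ) (G : Finset HexE)
    (Z : Set Config) (hZ : MeasurableSet Z) (hZ0 : μ Z = 0) :
    μ {ω | IsConfig ω ∧ IsConfig (flipG G ω) ∧ flipG G ω ∈ Z} = 0 := by
  classical
  haveI := hGibbs.1
  obtain ⟨K, hK, hKle⟩ := cyl_ineq a b c ha hb hc μ hGibbs G
  let X : Set Config := {ω | IsConfig ω ∧ IsConfig (flipG G ω)}
  have hX : MeasurableSet X := meas_IsConfig.inter (meas_flipG G meas_IsConfig)
  let ρ : Measure Config := (μ.restrict X).map (flipG G)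
  have hρ : ∀ A, MeasurableSet A → ρ A = μ (flipG G ⁻¹' A ∩ X) := by
    intro A hA
    rw [Measure.map_apply (meas_flipG G) hA, Measure.restrict_apply (meas_flipG G hA)]
  haveI : IsFiniteMeasure ρ := by
    constructor
    rw [hρ _ MeasurableSet.univ]; exact measure_lt_top _ _
  have hcyl : ∀ C ∈ measurableCylinders (fun _ : HexE => Bool), ρ C ≤ K * μ C := by
    intro C hC
    have hCm : MeasurableSet C := MeasurableSet.of_mem_measurableCylinders hC
    obtain ⟨s, S, hS, rfl⟩ := (mem_measurableCylinders _).1 hC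
    let F := G ∪ s
    let E : Set HexE := ↑F ∪ edgeNbhd F
    have hE : E.Finite := F.finite_toSet.union (edgeNbhd_finite F)
    haveI : Finite E := hE
    haveI : Fintype (E → Bool) := Fintype.ofFinite _
    let r : Config → (E → Bool) := fun ω e => ω e
    have hr : Measurable r := measurable_pi_lambda _ fun e => measurable_pi_apply _
    have hsum : ∀ m : Measure Config, m (cylinder s S) =
        ∑ p : E → Bool, m (r ⁻¹' {p} ∩ cylinder s S) := by
      intro m
      have := sum_measure_preimage_singleton (μ := m.restrict (cylinder s S)) Finset.univ
        (f := r) (fun y _ => hr (measurableSet_singleton y))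
      simp only [Finset.coe_univ, Set.preimage_univ, Measure.restrict_apply_univ] at this
      rw [← this]
      refine Finset.sum_congr rfl fun p _ => ?_
      rw [Measure.restrict_apply (hr (measurableSet_singleton p))]
    rw [hsum ρ, hsum μ, Finset.mul_sum]
    refine Finset.sum_le_sum fun p _ => ?_
    rw [hρ _ ((hr (measurableSet_singleton p)).inter hCm)]
    rcases Set.eq_empty_or_nonempty (flipG G ⁻¹' (r ⁻¹' {p} ∩ cylinder s S) ∩ X) with h0 | ⟨ω₀, h0⟩
    · rw [h0]; simp
    · obtain ⟨⟨h1, h2⟩, h3, h4⟩ := h0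
      calc _ ≤ μ (cyl E ω₀) := by
            apply measure_mono
            rintro ω ⟨⟨h5, h6⟩, h7⟩ e he
            have h8 : flipG G ω e = flipG G ω₀ e := by
              have e1 : r (flipG G ω) = p := h5
              have e2 : r (flipG G ω₀) = p := h1
              exact congrFun (e1.trans e2.symm) ⟨e, he⟩
            by_cases hG : e ∈ G <;> simpa [flipG, hG] using h8
        _ ≤ K * μ (cyl E (flipG G ω₀)) := hKle F Finset.subset_union_left ω₀ h3 h4
        _ ≤ _ := by
            gcongr
            intro ω hω
            refine ⟨?_, ?_⟩
            · have e2 : r (flipG G ω₀) = p := h1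
              rw [← e2]
              funext e
              exact hω e e.2
            · rw [mem_cylinder] at h2 ⊢
              convert h2 using 1
              funext e
              exact hω e (Or.inl (Finset.mem_coe.2 (Finset.mem_union_right _ e.2)))
  have hle : ∀ ε : ENNReal, 0 < ε → ρ Z ≤ (1 + K) * ε := by
    intro ε hε
    obtain ⟨t, ht, htε⟩ := exists_measure_symmDiff_lt_of_generateFrom_isSetRing (μ := μ + ρ)
      (isSetAlgebra_measurableCylinders (α := fun _ : HexE => Bool)).isSetRing
      ⟨{Set.univ}, Set.countable_singleton _,
        by simpa using univ_mem_measurableCylinders (fun _ : HexE => Bool), by simp⟩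
      (generateFrom_measurableCylinders (α := fun _ : HexE => Bool)).symm hZ hε
    rw [Measure.add_apply] at htε
    have h1 : ρ (symmDiff t Z) ≤ ε := le_add_self.trans htε.le
    have h2 : μ (symmDiff t Z) ≤ ε := le_self_add.trans htε.le
    have h3 : μ t ≤ ε := by
      calc μ t ≤ μ (symmDiff t Z ∪ Z) := measure_mono (by
            intro x hx
            by_cases hxZ : x ∈ Z
            · exact Or.inr hxZ
            · exact Or.inl (Or.inl ⟨hx, hxZ⟩))
        _ ≤ _ := measure_union_le _ _
        _ ≤ ε := by rw [hZ0, add_zero]; exact h2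
    calc ρ Z ≤ ρ (symmDiff t Z ∪ t) := measure_mono (by
            intro x hx
            by_cases hxt : x ∈ t
            · exact Or.inr hxt
            · exact Or.inl (Or.inr ⟨hx, hxt⟩))
      _ ≤ ρ (symmDiff t Z) + ρ t := measure_union_le _ _
      _ ≤ ε + K * ε := by
          gcongr
          exact (hcyl t ht).trans (by gcongr)
      _ = _ := by ring
  have h1K : 1 + K ≠ ⊤ := by simp [hK]
  have hdiv : ρ Z / (1 + K) ≤ 0 := by
    refine le_of_forall_gt_imp_ge_of_dense fun ε hε => ?_
    exact ENNReal.div_le_of_le_mul' (hle ε hε)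
  have hρZ : ρ Z = 0 := by
    rcases ENNReal.div_eq_zero_iff.1 (le_antisymm hdiv bot_le) with h | h
    · exact h
    · exact absurd h h1K
  rw [hρ Z hZ] at hρZ
  convert hρZ using 2
  ext ω
  simp only [X, Set.mem_ofPred_eq, Set.mem_inter_iff, Set.mem_preimage]
  tauto

theorem no_finite_number_of_infinite_homogeneous_clusters
    (a b c : ℝ) (ha : 0 < a) (hb : 0 < b) (hc : 0 < c)
    (μ : Measure Config) (hGibbs : IsGibbs a b c μ) (hTI : TransInvariant μ)
    (hErg : IsErgodicTI μ) (τ₀ : Fin 3 → Bool) (hτ₀ : validConf τ₀)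
    (k : ℕ) (hk : 1 < k) :
    μ {ω : Config | numInfClusters ω τ₀ = (k : ℕ∞)} = 0 := by
  haveI := hGibbs.1
  set A : Set Config := {ω : Config | numInfClusters ω τ₀ = (k : ℕ∞)} with hA
  have hAm : MeasurableSet A := meas_eq τ₀ k
  rcases hErg A hAm (fun g => by ext ω; simp [hA, num_shift]) with h | h
  · exact h
  · have hZ0 : μ Aᶜ = 0 := (prob_compl_eq_zero_iff hAm).2 h
    have hΩ0 : μ {ω | IsConfig ω}ᶜ = 0 := (prob_compl_eq_zero_iff meas_IsConfig).2 hGibbs.2.1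
    have hU : μ (⋃ G : Finset HexE,
        {ω | IsConfig ω ∧ IsConfig (flipG G ω) ∧ flipG G ω ∈ Aᶜ}) = 0 :=
      measure_iUnion_null fun G => flip_null a b c ha hb hc μ hGibbs G _ hAm.compl hZ0
    refine measure_mono_null ?_ (measure_union_null hΩ0 hU)
    intro ω hω
    by_cases hc' : IsConfig ω
    · right
      obtain ⟨G, ω', h1, h2, h3⟩ := exists_change τ₀ hτ₀ ω hc' k hk hω
      have hf : flipG G ω = ω' := by
        funext e
        by_cases he : e ∈ G
        · have := (h2 e).2 he
          simp only [flipG, he, if_true]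
          revert this
          cases ω e <;> cases ω' e <;> simp
        · have := mt (h2 e).1 he
          simp only [flipG, he, if_false]
          exact (not_not.1 this).symm
      refine Set.mem_iUnion.2 ⟨G, hc', ?_, ?_⟩
      · rw [hf]; exact h1
      · rw [hf]; exact h3
    · exact Or.inl hc'
end

section
/- Let μ be an ergodic translation-invariant Gibbs measure for the 1-2 model on the hexagonal lattice ℍ (with any weights a, b, c > 0), and let 𝒩_{001}(ω) denote the number of infinite {001}-clusters of ω. Then there exists κ ∈ {0, 1, ∞} such that μ({ω : 𝒩_{001}(ω) = κ}) = 1. -/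
open MeasureTheory

namespace OneTwo

theorem mem_conf_true (ω : Config) (x y : ℤ) :
    ((x, y, true) : HexV) ∈ confSet ω conf001 ↔
      ω (x, y, 0) = true ∧ ω (x, y, 1) = false ∧ ω (x, y, 2) = false := by
  simp [confSet, localConf, conf001, funext_iff, Fin.forall_fin_succ, edgesAt]

theorem mem_conf_false (ω : Config) (x y : ℤ) :
    ((x, y, false) : HexV) ∈ confSet ω conf001 ↔
      ω (x, y, 0) = true ∧ ω (x - 1, y, 1) = false ∧ ω (x, y - 1, 2) = false := by
  simp [confSet, localConf, conf001, funext_iff, Fin.forall_fin_succ, edgesAt]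

theorem card_bool (p q r : Bool) :
    (1 ≤ (Finset.univ.filter fun i : Fin 3 => (![p, q, r] : Fin 3 → Bool) i = true).card ∧
      (Finset.univ.filter fun i : Fin 3 => (![p, q, r] : Fin 3 → Bool) i = true).card ≤ 2) ↔
      ((p = true ∨ q = true ∨ r = true) ∧ ¬ (p = true ∧ q = true ∧ r = true)) := by
  revert p q r; decide

theorem localConf_eq (ω : Config) (v : HexV) :
    localConf ω v = ![ω (edgesAt v 0), ω (edgesAt v 1), ω (edgesAt v 2)] := by
  funext i; fin_cases i <;> rfl

def okAt (p q r : Bool) : Prop :=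
  (p = true ∨ q = true ∨ r = true) ∧ ¬ (p = true ∧ q = true ∧ r = true)

theorem isConfig_iff (ω : Config) : IsConfig ω ↔ ∀ x y : ℤ,
    okAt (ω (x, y, 0)) (ω (x, y, 1)) (ω (x, y, 2)) ∧
    okAt (ω (x, y, 0)) (ω (x - 1, y, 1)) (ω (x, y - 1, 2)) := by
  unfold IsConfig
  constructor
  · intro h x y
    have h1 := h (x, y, true)
    have h2 := h (x, y, false)
    rw [localConf_eq, card_bool] at h1 h2
    exact ⟨by simpa [okAt, edgesAt] using h1, by simpa [okAt, edgesAt] using h2⟩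
  · rintro h ⟨x, y, t⟩
    rw [localConf_eq, card_bool]
    cases t
    · simpa [okAt, edgesAt] using (h x y).2
    · simpa [okAt, edgesAt] using (h x y).1

theorem weight_mem (a b c : ℝ) (ω : Config) (h : IsConfig ω) (v : HexV) :
    weight a b c (localConf ω v) = a ∨ weight a b c (localConf ω v) = b ∨
      weight a b c (localConf ω v) = c := by
  have h1 := h v
  rw [localConf_eq, card_bool] at h1
  rw [localConf_eq]
  generalize ω (edgesAt v 0) = p at *
  generalize ω (edgesAt v 1) = q at *
  generalize ω (edgesAt v 2) = r at *
  cases p <;> cases q <;> cases r <;> simp [weight] at *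

theorem HexAdj.symm {v w : HexV} (h : HexAdj v w) : HexAdj w v := by
  obtain ⟨h1, e, h2, h3⟩ := h
  exact ⟨h1.symm, e, h3, h2⟩

theorem adj_a (x y : ℤ) : HexAdj (x, y, true) (x, y, false) :=
  ⟨by simp, (x, y, 0), by simp [end1, end2]⟩

theorem adj_b (x y : ℤ) : HexAdj (x, y, true) (x + 1, y, false) :=
  ⟨by simp, (x, y, 1), by simp [end1, end2]⟩

theorem adj_c (x y : ℤ) : HexAdj (x, y, true) (x, y + 1, false) :=
  ⟨by simp, (x, y, 2), by simp [end1, end2]⟩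

/-- connectivity inside `S` -/
def Conn (S : Set HexV) (v w : HexV) : Prop := Relation.ReflTransGen (adjIn S) v w

theorem Conn.symm {S : Set HexV} {v w : HexV} (h : Conn S v w) : Conn S w v := by
  induction h with
  | refl => exact Relation.ReflTransGen.refl
  | tail _ h2 ih => exact Relation.ReflTransGen.head ⟨HexAdj.symm h2.1, h2.2.2, h2.2.1⟩ ih

theorem Conn.trans {S : Set HexV} {u v w : HexV} (h : Conn S u v) (h' : Conn S v w) :
    Conn S u w := Relation.ReflTransGen.trans h h'

theorem Conn.rfl {S : Set HexV} {u : HexV} : Conn S u u := Relation.ReflTransGen.refl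

theorem Conn.mono {S T : Set HexV} (hST : S ⊆ T) {u v : HexV} (h : Conn S u v) :
    Conn T u v :=
  Relation.ReflTransGen.mono (r := adjIn S) (p := adjIn T)
    (fun _ _ h => ⟨h.1, hST h.2.1, hST h.2.2⟩) _ _ h

theorem Conn.mem {S : Set HexV} {u v : HexV} (h : Conn S u v) (hu : u ∈ S) : v ∈ S := by
  induction h with
  | refl => exact hu
  | tail _ h2 _ => exact h2.2.2

theorem compOf_eq {S : Set HexV} {u v : HexV} (h : Conn S u v) : compOf S u = compOf S v := by
  ext w
  exact ⟨fun h' => h.symm.trans h', fun h' => h.trans h'⟩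

theorem conn_a {S : Set HexV} {x y : ℤ} (h1 : ((x, y, true) : HexV) ∈ S)
    (h2 : ((x, y, false) : HexV) ∈ S) : Conn S (x, y, true) (x, y, false) :=
  Relation.ReflTransGen.single ⟨adj_a x y, h1, h2⟩

theorem conn_b {S : Set HexV} {x y : ℤ} (h1 : ((x, y, true) : HexV) ∈ S)
    (h2 : ((x + 1, y, false) : HexV) ∈ S) : Conn S (x, y, true) (x + 1, y, false) :=
  Relation.ReflTransGen.single ⟨adj_b x y, h1, h2⟩

theorem conn_c {S : Set HexV} {x y : ℤ} (h1 : ((x, y, true) : HexV) ∈ S)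
    (h2 : ((x, y + 1, false) : HexV) ∈ S) : Conn S (x, y, true) (x, y + 1, false) :=
  Relation.ReflTransGen.single ⟨adj_c x y, h1, h2⟩

/-- variants with the lower vertex as base -/
theorem conn_b' {S : Set HexV} {x y : ℤ} (h1 : ((x - 1, y, true) : HexV) ∈ S)
    (h2 : ((x, y, false) : HexV) ∈ S) : Conn S (x - 1, y, true) (x, y, false) := by
  have := @conn_b S (x - 1) y h1 (by simpa using h2)
  simpa using this

theorem conn_c' {S : Set HexV} {x y : ℤ} (h1 : ((x, y - 1, true) : HexV) ∈ S)
    (h2 : ((x, y, false) : HexV) ∈ S) : Conn S (x, y - 1, true) (x, y, false) := by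
  have := @conn_c S x (y - 1) h1 (by simpa using h2)
  simpa using this

/-- The rectangle is connected. -/
theorem rect_conn (S : Set HexV) (X1 Y1 X2 Y2 : ℤ) (hX : X1 + 2 ≤ X2) (hY : Y1 + 2 ≤ Y2)
    (hZ : ∀ x y, X1 < x → x ≤ X2 → Y1 < y → y ≤ Y2 → ((x, y, false) : HexV) ∈ S)
    (hO : ∀ x y, X1 ≤ x → x < X2 → Y1 ≤ y → y < Y2 → ((x, y, true) : HexV) ∈ S)
    (hU : ((X2 - 1, Y2, true) : HexV) ∈ S ∨ ((X2, Y2 - 1, true) : HexV) ∈ S)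
    (hL : ((X1 + 1, Y1, false) : HexV) ∈ S ∨ ((X1, Y1 + 1, false) : HexV) ∈ S)
    (x y : ℤ) (t : Bool) (hx1 : X1 ≤ x) (hx2 : x ≤ X2) (hy1 : Y1 ≤ y) (hy2 : y ≤ Y2)
    (hv : ((x, y, t) : HexV) ∈ S) : Conn S (X1 + 1, Y1 + 1, true) (x, y, t) := by
  have inx : ∀ n : ℕ, X1 + 1 + n < X2 →
      Conn S (X1 + 1, Y1 + 1, true) (X1 + 1 + n, Y1 + 1, true) := by
    intro n
    induction n with
    | zero => intro _; simpa using Conn.rfl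
    | succ n ih =>
      intro h
      push_cast at h ⊢
      have e := ih (by omega)
      have e1 := @conn_b S (X1 + 1 + n) (Y1 + 1) (hO _ _ (by omega) (by omega) (by omega) (by omega))
        (hZ _ _ (by omega) (by omega) (by omega) (by omega))
      have e2 := @conn_a S (X1 + 1 + n + 1) (Y1 + 1)
        (hO _ _ (by omega) (by omega) (by omega) (by omega))
        (hZ _ _ (by omega) (by omega) (by omega) (by omega))
      have := (e.trans e1).trans e2.symm
      rwa [← add_assoc]
  have iny : ∀ x, X1 < x → x < X2 → ∀ n : ℕ, Y1 + 1 + n < Y2 →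
      Conn S (X1 + 1, Y1 + 1, true) (x, Y1 + 1 + n, true) := by
    intro x h1 h2 n
    induction n with
    | zero =>
      intro _
      obtain ⟨k, hk⟩ := Int.eq_ofNat_of_zero_le (show 0 ≤ x - (X1 + 1) by omega)
      have := inx k (by omega)
      have e : X1 + 1 + (k : ℤ) = x := by omega
      rw [e] at this
      simpa using this
    | succ n ih =>
      intro h
      push_cast at h ⊢
      have e := ih (by omega)
      have e1 := @conn_c S x (Y1 + 1 + n) (hO _ _ (by omega) (by omega) (by omega) (by omega))
        (hZ _ _ (by omega) (by omega) (by omega) (by omega))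
      have e2 := @conn_a S x (Y1 + 1 + n + 1)
        (hO _ _ (by omega) (by omega) (by omega) (by omega))
        (hZ _ _ (by omega) (by omega) (by omega) (by omega))
      have := (e.trans e1).trans e2.symm
      rwa [← add_assoc]
  have inO : ∀ x y, X1 < x → x < X2 → Y1 < y → y < Y2 →
      Conn S (X1 + 1, Y1 + 1, true) (x, y, true) := by
    intro x y h1 h2 h3 h4
    obtain ⟨k, hk⟩ := Int.eq_ofNat_of_zero_le (show 0 ≤ y - (Y1 + 1) by omega)
    have := iny x h1 h2 k (by omega)
    have e : Y1 + 1 + (k : ℤ) = y := by omega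
    rwa [e] at this
  have inZ : ∀ x y, X1 < x → x < X2 → Y1 < y → y < Y2 →
      Conn S (X1 + 1, Y1 + 1, true) (x, y, false) := by
    intro x y h1 h2 h3 h4
    exact (inO x y h1 h2 h3 h4).trans (conn_a (hO _ _ h1.le h2 h3.le h4) (hZ _ _ h1 h2.le h3 h4.le))
  -- good Z's
  have topZ : ∀ x, X1 < x → x < X2 → Conn S (X1 + 1, Y1 + 1, true) (x, Y2, false) := by
    intro x h1 h2
    exact (inO x (Y2 - 1) h1 h2 (by omega) (by omega)).trans
      (conn_c' (hO _ _ (by omega) (by omega) (by omega) (by omega))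
        (hZ _ _ (by omega) (by omega) (by omega) (by omega)))
  have rightZ : ∀ y, Y1 < y → y < Y2 → Conn S (X1 + 1, Y1 + 1, true) (X2, y, false) := by
    intro y h1 h2
    exact (inO (X2 - 1) y (by omega) (by omega) (by omega) (by omega)).trans
      (conn_b' (hO _ _ (by omega) (by omega) (by omega) (by omega))
        (hZ _ _ (by omega) (by omega) (by omega) (by omega)))
  have botO : ∀ x, X1 < x → x < X2 → Conn S (X1 + 1, Y1 + 1, true) (x, Y1, true) := by
    intro x h1 h2
    exact (inZ x (Y1 + 1) h1 h2 (by omega) (by omega)).trans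
      (conn_c (hO _ _ (by omega) (by omega) (by omega) (by omega))
        (hZ _ _ (by omega) (by omega) (by omega) (by omega))).symm
  have leftO : ∀ y, Y1 < y → y < Y2 → Conn S (X1 + 1, Y1 + 1, true) (X1, y, true) := by
    intro y h1 h2
    exact (inZ (X1 + 1) y (by omega) (by omega) h1 h2).trans
      (conn_b (hO _ _ (by omega) (by omega) (by omega) (by omega))
        (hZ _ _ (by omega) (by omega) (by omega) (by omega))).symm
  have cornZ : Conn S (X1 + 1, Y1 + 1, true) (X2, Y2, false) := by
    have hc := hZ X2 Y2 (by omega) (by omega) (by omega) (by omega)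
    rcases hU with h | h
    · exact ((topZ (X2 - 1) (by omega) (by omega)).trans
        (conn_a h (hZ _ _ (by omega) (by omega) (by omega) (by omega))).symm).trans (conn_b' h hc)
    · exact ((rightZ (Y2 - 1) (by omega) (by omega)).trans
        (conn_a h (hZ _ _ (by omega) (by omega) (by omega) (by omega))).symm).trans (conn_c' h hc)
  have cornO : Conn S (X1 + 1, Y1 + 1, true) (X1, Y1, true) := by
    have hc := hO X1 Y1 (by omega) (by omega) (by omega) (by omega)
    rcases hL with h | h
    · exact ((botO (X1 + 1) (by omega) (by omega)).trans
        (conn_a (hO _ _ (by omega) (by omega) (by omega) (by omega)) h)).trans (conn_b hc h).symm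
    · exact ((leftO (Y1 + 1) (by omega) (by omega)).trans
        (conn_a (hO _ _ (by omega) (by omega) (by omega) (by omega)) h)).trans (conn_c hc h).symm
  -- all full Z and O
  have allZ : ∀ x y, X1 < x → x ≤ X2 → Y1 < y → y ≤ Y2 →
      Conn S (X1 + 1, Y1 + 1, true) (x, y, false) := by
    intro x y h1 h2 h3 h4
    rcases h2.lt_or_eq with h2 | rfl <;> rcases h4.lt_or_eq with h4 | rfl
    · exact inZ x y h1 h2 h3 h4
    · exact topZ x h1 h2
    · exact rightZ y h3 h4
    · exact cornZ
  have allO : ∀ x y, X1 ≤ x → x < X2 → Y1 ≤ y → y < Y2 →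
      Conn S (X1 + 1, Y1 + 1, true) (x, y, true) := by
    intro x y h1 h2 h3 h4
    rcases h1.lt_or_eq with h1 | rfl <;> rcases h3.lt_or_eq with h3 | rfl
    · exact inO x y h1 h2 h3 h4
    · exact botO x h1 h2
    · exact leftO y h3 h4
    · exact cornO
  cases t
  · by_cases h1 : X1 < x ∧ Y1 < y
    · exact allZ x y h1.1 hx2 h1.2 hy2
    by_cases h2 : x < X2 ∧ y < Y2
    · exact (allO x y hx1 h2.1 hy1 h2.2).trans
        (conn_a (hO _ _ hx1 h2.1 hy1 h2.2) hv)
    by_cases h3 : x = X1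
    · have h := hO x (y - 1) (by omega) (by omega) (by omega) (by omega)
      exact (allO x (y - 1) (by omega) (by omega) (by omega) (by omega)).trans (conn_c' h hv)
    · have h := hO (x - 1) y (by omega) (by omega) (by omega) (by omega)
      exact (allO (x - 1) y (by omega) (by omega) (by omega) (by omega)).trans (conn_b' h hv)
  · by_cases h1 : x < X2 ∧ y < Y2
    · exact allO x y hx1 h1.1 hy1 h1.2
    by_cases h2 : X1 < x ∧ Y1 < y
    · exact (allZ x y h2.1 hx2 h2.2 hy2).trans
        (conn_a hv (hZ _ _ h2.1 hx2 h2.2 hy2)).symm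
    by_cases h3 : x = X2
    · have h := hZ x (y + 1) (by omega) (by omega) (by omega) (by omega)
      exact (allZ x (y + 1) (by omega) (by omega) (by omega) (by omega)).trans (conn_c hv h).symm
    · have h := hZ (x + 1) y (by omega) (by omega) (by omega) (by omega)
      exact (allZ (x + 1) y (by omega) (by omega) (by omega) (by omega)).trans (conn_b hv h).symm

/-- Edges inside a rectangle. -/
noncomputable def rectF (X1 Y1 X2 Y2 : ℤ) : Finset HexE :=
  (Finset.Icc X1 X2 ×ˢ Finset.Icc Y1 Y2 ×ˢ (Finset.univ : Finset (Fin 3))).filter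
    fun e => (e.2.2 = 1 → e.1 < X2) ∧ (e.2.2 = 2 → e.2.1 < Y2)

/-- Overwrite `ω` on `F` by the pure horizontal configuration. -/
noncomputable def ovr (F : Finset HexE) (ω : Config) : Config := fun e =>
  if e ∈ F then decide (e.2.2 = 0) else ω e

theorem mem_rectF0 {X1 Y1 X2 Y2 x y : ℤ} : ((x, y, 0) : HexE) ∈ rectF X1 Y1 X2 Y2 ↔
    X1 ≤ x ∧ x ≤ X2 ∧ Y1 ≤ y ∧ y ≤ Y2 := by
  simp [rectF]; omega
theorem mem_rectF1 {X1 Y1 X2 Y2 x y : ℤ} : ((x, y, 1) : HexE) ∈ rectF X1 Y1 X2 Y2 ↔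
    X1 ≤ x ∧ x < X2 ∧ Y1 ≤ y ∧ y ≤ Y2 := by
  simp [rectF]; omega
theorem mem_rectF2 {X1 Y1 X2 Y2 x y : ℤ} : ((x, y, 2) : HexE) ∈ rectF X1 Y1 X2 Y2 ↔
    X1 ≤ x ∧ x ≤ X2 ∧ Y1 ≤ y ∧ y < Y2 := by
  simp [rectF]; omega

theorem over0 (X1 Y1 X2 Y2 x y : ℤ) (ω : Config) : ovr (rectF X1 Y1 X2 Y2) ω (x, y, 0) =
    if X1 ≤ x ∧ x ≤ X2 ∧ Y1 ≤ y ∧ y ≤ Y2 then true else ω (x, y, 0) := by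
  simp [ovr, mem_rectF0]
theorem over1 (X1 Y1 X2 Y2 x y : ℤ) (ω : Config) : ovr (rectF X1 Y1 X2 Y2) ω (x, y, 1) =
    if X1 ≤ x ∧ x < X2 ∧ Y1 ≤ y ∧ y ≤ Y2 then false else ω (x, y, 1) := by
  simp [ovr, mem_rectF1]
theorem over2 (X1 Y1 X2 Y2 x y : ℤ) (ω : Config) : ovr (rectF X1 Y1 X2 Y2) ω (x, y, 2) =
    if X1 ≤ x ∧ x ≤ X2 ∧ Y1 ≤ y ∧ y < Y2 then false else ω (x, y, 2) := by
  simp [ovr, mem_rectF2]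

theorem over_isConfig {ω : Config} (hω : IsConfig ω) (X1 Y1 X2 Y2 : ℤ)
    (h1 : ω (X1, Y1, 0) = true) (h2 : ω (X2, Y2, 0) = true) :
    IsConfig (ovr (rectF X1 Y1 X2 Y2) ω) := by
  rw [isConfig_iff] at *
  intro x y
  obtain ⟨ha, hb⟩ := hω x y
  simp only [over0, over1, over2]
  constructor
  · by_cases hR : X1 ≤ x ∧ x ≤ X2 ∧ Y1 ≤ y ∧ y ≤ Y2
    · by_cases hc : x = X2 ∧ y = Y2
      · obtain ⟨rfl, rfl⟩ := hc
        rw [if_pos hR, if_neg (by omega), if_neg (by omega), ← h2]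
        exact ha
      · rw [if_pos hR]
        by_cases hx : x < X2
        · rw [if_pos (by omega)]; simp [okAt]
        · rw [if_pos (show X1 ≤ x ∧ x ≤ X2 ∧ Y1 ≤ y ∧ y < Y2 by omega)]; simp [okAt]
    · rw [if_neg hR, if_neg (by omega), if_neg (by omega)]; exact ha
  · by_cases hR : X1 ≤ x ∧ x ≤ X2 ∧ Y1 ≤ y ∧ y ≤ Y2
    · by_cases hc : x = X1 ∧ y = Y1
      · obtain ⟨rfl, rfl⟩ := hc
        rw [if_pos hR, if_neg (by omega), if_neg (by omega), ← h1]
        exact hb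
      · rw [if_pos hR]
        by_cases hx : X1 < x
        · rw [if_pos (by omega)]; simp [okAt]
        · rw [if_pos (show X1 ≤ x ∧ x ≤ X2 ∧ Y1 ≤ y - 1 ∧ y - 1 < Y2 by omega)]; simp [okAt]
    · rw [if_neg hR, if_neg (by omega), if_neg (by omega)]; exact hb

theorem over_subset (ω : Config) (X1 Y1 X2 Y2 : ℤ) :
    confSet ω conf001 ⊆ confSet (ovr (rectF X1 Y1 X2 Y2) ω) conf001 := by
  rintro ⟨x, y, t⟩ h
  cases t
  · rw [mem_conf_false] at *
    simp [over0, over1, over2, h.1, h.2.1, h.2.2]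
  · rw [mem_conf_true] at *
    simp [over0, over1, over2, h.1, h.2.1, h.2.2]

theorem over_outside (ω : Config) (X1 Y1 X2 Y2 x y : ℤ) (t : Bool)
    (hR : ¬ (X1 ≤ x ∧ x ≤ X2 ∧ Y1 ≤ y ∧ y ≤ Y2))
    (h : ((x, y, t) : HexV) ∈ confSet (ovr (rectF X1 Y1 X2 Y2) ω) conf001) :
    ((x, y, t) : HexV) ∈ confSet ω conf001 := by
  cases t
  · rw [mem_conf_false] at *
    simp only [over0, over1, over2] at h
    rwa [if_neg hR, if_neg (by omega), if_neg (by omega)] at h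
  · rw [mem_conf_true] at *
    simp only [over0, over1, over2] at h
    rwa [if_neg hR, if_neg (by omega), if_neg (by omega)] at h

def inRect (X1 Y1 X2 Y2 : ℤ) (v : HexV) : Prop :=
  X1 ≤ v.1 ∧ v.1 ≤ X2 ∧ Y1 ≤ v.2.1 ∧ v.2.1 ≤ Y2

def lowerQ (ω : Config) (x y : ℤ) : Prop :=
  ((x, y, true) : HexV) ∈ confSet ω conf001 ∧
    (((x + 1, y, false) : HexV) ∈ confSet ω conf001 ∨
      ((x, y + 1, false) : HexV) ∈ confSet ω conf001)

def upperQ (ω : Config) (x y : ℤ) : Prop :=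
  ((x, y, false) : HexV) ∈ confSet ω conf001 ∧
    (((x - 1, y, true) : HexV) ∈ confSet ω conf001 ∨
      ((x, y - 1, true) : HexV) ∈ confSet ω conf001)

theorem over_num_le_one {ω : Config} {X1 Y1 X2 Y2 : ℤ}
    (hX : X1 + 2 ≤ X2) (hY : Y1 + 2 ≤ Y2) (hL : lowerQ ω X1 Y1) (hU : upperQ ω X2 Y2)
    (hmeet : ∀ C, IsCluster ω conf001 C → C.Infinite → ∃ v ∈ C, inRect X1 Y1 X2 Y2 v) :
    numInfClusters (ovr (rectF X1 Y1 X2 Y2) ω) conf001 ≤ 1 := by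
  set S := confSet ω conf001 with hS
  set S' := confSet (ovr (rectF X1 Y1 X2 Y2) ω) conf001 with hS'
  have hsub : S ⊆ S' := over_subset ω X1 Y1 X2 Y2
  have key : ∀ v ∈ S', inRect X1 Y1 X2 Y2 v → Conn S' (X1 + 1, Y1 + 1, true) v := by
    rintro ⟨x, y, t⟩ hv ⟨h1, h2, h3, h4⟩
    refine rect_conn S' X1 Y1 X2 Y2 hX hY ?_ ?_ (hU.2.imp (fun h => hsub h) (fun h => hsub h))
      (hL.2.imp (fun h => hsub h) (fun h => hsub h)) x y t h1 h2 h3 h4 hv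
    · intro x y h1 h2 h3 h4
      rw [hS', mem_conf_false, over0, over1, over2, if_pos (by omega), if_pos (by omega),
        if_pos (by omega)]
      simp
    · intro x y h1 h2 h3 h4
      rw [hS', mem_conf_true, over0, over1, over2, if_pos (by omega), if_pos (by omega),
        if_pos (by omega)]
      simp
  have main : ∀ D, IsCluster (ovr (rectF X1 Y1 X2 Y2) ω) conf001 D → D.Infinite →
      D = compOf S' (X1 + 1, Y1 + 1, true) := by
    rintro D ⟨v, hv, rfl⟩ hinf
    change v ∈ S' at hv
    change (compOf S' v).Infinite at hinf
    change compOf S' v = _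
    obtain ⟨w, hw, hwR⟩ : ∃ w, Conn S' v w ∧ inRect X1 Y1 X2 Y2 w := by
      by_contra hcon
      push Not at hcon
      have hout : ∀ w, Conn S' v w → w ∈ S := by
        rintro ⟨x, y, t⟩ hw
        exact over_outside ω X1 Y1 X2 Y2 x y t (hcon _ hw) (hw.mem hv)
      have hc : ∀ w, Conn S' v w → Conn S v w := by
        intro w hw
        induction hw with
        | refl => exact Conn.rfl
        | tail h1 h2 ih =>
          exact Relation.ReflTransGen.tail ih ⟨h2.1, hout _ h1, hout _ (Relation.ReflTransGen.tail h1 h2)⟩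
      obtain ⟨w, hw, hwR⟩ := hmeet (compOf S v) ⟨v, hout v Conn.rfl, rfl⟩
        (hinf.mono fun w hw => hc w hw)
      exact hcon w (Conn.mono hsub hw) hwR
    rw [compOf_eq hw, compOf_eq (key w (hw.mem hv) hwR)]
  unfold numInfClusters
  rw [Set.encard_le_one_iff]
  intro C D hC hD
  rw [main C hC.1 hC.2, main D hD.1 hD.2]

theorem incident_iff (v : HexV) (e : HexE) :
    (v = end1 e ∨ v = end2 e) ↔ ∃ i, e = edgesAt v i := by
  obtain ⟨x, y, t⟩ := v
  obtain ⟨p, q, k⟩ := e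
  cases t <;> fin_cases k <;> simp [end1, end2, edgesAt, Fin.exists_fin_succ] <;> omega

theorem edgesAt_nbhd {F : Finset HexE} {v : HexV} (hv : v ∈ verts F) (i : Fin 3) :
    edgesAt v i ∈ edgeNbhd F := by
  have h1 := (incident_iff v (edgesAt v i)).2 ⟨i, rfl⟩
  simp only [verts, endsFinset, Finset.mem_biUnion, Finset.mem_insert, Finset.mem_singleton] at hv
  obtain ⟨e, he, h2⟩ := hv
  refine ⟨e, he, ?_⟩
  rcases h1 with h1 | h1 <;> rcases h2 with h2 | h2 <;> rw [← h1, ← h2] <;> simp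

theorem edgeNbhd_finite (F : Finset HexE) : (edgeNbhd F).Finite := by
  apply Set.Finite.subset (Set.Finite.biUnion (verts F).finite_toSet
    fun v _ => Set.finite_range (edgesAt v))
  rintro e' ⟨e, he, h⟩
  have h1 : end1 e ∈ verts F := by
    simp only [verts, endsFinset, Finset.mem_biUnion]; exact ⟨e, he, by simp⟩
  have h2 : end2 e ∈ verts F := by
    simp only [verts, endsFinset, Finset.mem_biUnion]; exact ⟨e, he, by simp⟩
  have : (end1 e = end1 e' ∨ end1 e = end2 e') ∨ (end2 e = end1 e' ∨ end2 e = end2 e') := by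
    tauto
  rw [incident_iff, incident_iff] at this
  simp only [Set.mem_iUnion]
  rcases this with ⟨i, hi⟩ | ⟨i, hi⟩
  · exact ⟨_, h1, i, hi.symm⟩
  · exact ⟨_, h2, i, hi.symm⟩

theorem localConf_off {F : Finset HexE} {σ τ : Config} (h : ∀ e ∉ F, σ e = τ e) {v : HexV}
    (hv : v ∉ verts F) : localConf σ v = localConf τ v := by
  funext i
  apply h
  intro hF
  apply hv
  have h1 := (incident_iff v (edgesAt v i)).2 ⟨i, rfl⟩
  simp only [verts, endsFinset, Finset.mem_biUnion, Finset.mem_insert, Finset.mem_singleton]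
  exact ⟨_, hF, h1⟩

theorem verts_mono {F F' : Finset HexE} (h : F ⊆ F') : verts F ⊆ verts F' :=
  Finset.biUnion_subset_biUnion_of_subset_left _ h

theorem edgeNbhd_mono {F F' : Finset HexE} (h : F ⊆ F') : edgeNbhd F ⊆ edgeNbhd F' := by
  rintro e' ⟨e, he, h'⟩
  exact ⟨e, h he, h'⟩

theorem cyl_measurable (S : Set HexE) (σ : Config) : MeasurableSet (cyl S σ) := by
  have : cyl S σ = ⋂ e ∈ S, (fun ω : Config => ω e) ⁻¹' {σ e} := by
    ext ω; simp [cyl]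
  rw [this]
  exact MeasurableSet.biInter (Set.to_countable _) fun e _ =>
    measurable_pi_apply e (MeasurableSet.singleton _)

theorem gibbs_bound {a b c : ℝ} (ha : 0 < a) (hb : 0 < b) (hc : 0 < c)
    {μ : Measure Config} (hG : IsGibbs a b c μ) (F : Finset HexE) :
    ∃ K : ENNReal, K ≠ ⊤ ∧ ∀ F' : Finset HexE, F ⊆ F' → ∀ σ τ : Config, IsConfig σ →
      IsConfig τ → (∀ e ∉ F, σ e = τ e) →
      μ (cyl (↑F' ∪ edgeNbhd F') σ) ≤ K * μ (cyl (↑F' ∪ edgeNbhd F') τ) := by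
  set m := min a (min b c) with hm
  set M := max a (max b c) with hM
  have hm0 : 0 < m := by simp [hm, ha, hb, hc]
  have wpos : ∀ σ, IsConfig σ → ∀ v, 0 < weight a b c (localConf σ v) := by
    intro σ hσ v
    rcases weight_mem a b c σ hσ v with h | h | h <;> rw [h] <;> assumption
  have wm : ∀ σ, IsConfig σ → ∀ v, m ≤ weight a b c (localConf σ v) := by
    intro σ hσ v
    rcases weight_mem a b c σ hσ v with h | h | h <;> rw [h] <;> simp [hm]
  have wM : ∀ σ, IsConfig σ → ∀ v, weight a b c (localConf σ v) ≤ M := by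
    intro σ hσ v
    rcases weight_mem a b c σ hσ v with h | h | h <;> rw [h] <;> simp [hM]
  set N := (verts F).card
  have hmN : 0 < m ^ N := pow_pos hm0 N
  refine ⟨ENNReal.ofReal (M ^ N / m ^ N), ENNReal.ofReal_ne_top, ?_⟩
  intro F' hF σ τ hσ hτ hoff
  have hg := hG.2.2 F' σ τ hσ hτ (fun e he => hoff e (fun h => he (hF h)))
  have hsd : ∏ v ∈ verts F' \ verts F, weight a b c (localConf σ v) =
      ∏ v ∈ verts F' \ verts F, weight a b c (localConf τ v) := by
    apply Finset.prod_congr rfl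
    intro v hv
    rw [localConf_off hoff (Finset.mem_sdiff.1 hv).2]
  have hp : 0 < ∏ v ∈ verts F' \ verts F, weight a b c (localConf τ v) :=
    Finset.prod_pos fun v _ => wpos τ hτ v
  have lo : m ^ N ≤ ∏ v ∈ verts F, weight a b c (localConf τ v) :=
    by
      rw [← Finset.prod_const]
      exact Finset.prod_le_prod (fun v _ => hm0.le) (fun v _ => wm τ hτ v)
  have hi : ∏ v ∈ verts F, weight a b c (localConf σ v) ≤ M ^ N :=
    by
      rw [← Finset.prod_const]
      exact Finset.prod_le_prod (fun v _ => (wpos σ hσ v).le) (fun v _ => wM σ hσ v)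
  have hle : ∏ v ∈ verts F', weight a b c (localConf σ v) ≤
      (M ^ N / m ^ N) * ∏ v ∈ verts F', weight a b c (localConf τ v) := by
    rw [← Finset.prod_sdiff (verts_mono hF), ← Finset.prod_sdiff (verts_mono hF), hsd]
    have : M ^ N ≤ (M ^ N / m ^ N) * ∏ v ∈ verts F, weight a b c (localConf τ v) := by
      rw [div_mul_eq_mul_div, le_div_iff₀ hmN]
      have : 0 ≤ M ^ N := le_trans (Finset.prod_nonneg fun v _ => (wpos σ hσ v).le) hi
      gcongr
    calc _ ≤ (∏ v ∈ verts F' \ verts F, weight a b c (localConf τ v)) *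
          ((M ^ N / m ^ N) * ∏ v ∈ verts F, weight a b c (localConf τ v)) := by
            gcongr; exact hi.trans this
      _ = _ := by ring
  have hτp : 0 < ∏ v ∈ verts F', weight a b c (localConf τ v) :=
    Finset.prod_pos fun v _ => wpos τ hτ v
  have hM0 : 0 ≤ M ^ N / m ^ N :=
    div_nonneg (le_trans (Finset.prod_nonneg fun v _ => (wpos σ hσ v).le) hi) hmN.le
  have hw0 : ENNReal.ofReal (∏ v ∈ verts F', weight a b c (localConf τ v)) ≠ 0 := by
    simpa using hτp
  rw [← ENNReal.mul_le_mul_iff_left hw0 ENNReal.ofReal_ne_top, hg]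
  calc _ ≤ μ (cyl (↑F' ∪ edgeNbhd F') τ) * (ENNReal.ofReal ((M ^ N / m ^ N) *
        ∏ v ∈ verts F', weight a b c (localConf τ v))) := by gcongr
    _ = _ := by rw [ENNReal.ofReal_mul hM0]; ring

theorem open_bound {a b c : ℝ} (ha : 0 < a) (hb : 0 < b) (hc : 0 < c)
    {μ : Measure Config} (hG : IsGibbs a b c μ) (F : Finset HexE) (π : Config) :
    ∃ K : ENNReal, K ≠ ⊤ ∧ ∀ U : Set Config, IsOpen U →
      μ {ω | IsConfig ω ∧ IsConfig (ovr F ω) ∧ (∀ e ∈ F, ω e = π e) ∧ ovr F ω ∈ U} ≤ K * μ U := by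
  obtain ⟨K, hK, hb⟩ := gibbs_bound ha hb hc hG F
  refine ⟨K, hK, ?_⟩
  intro U hU
  classical
  let Sg : Finset HexE → Set HexE := fun H => (↑(F ∪ H) : Set HexE) ∪ edgeNbhd (F ∪ H)
  have Sfin : ∀ H, (Sg H).Finite := fun H =>
    (Finset.finite_toSet _).union (edgeNbhd_finite _)
  have Smono : ∀ H H', H ⊆ H' → Sg H ⊆ Sg H' := by
    intro H H' h
    have h2 : F ∪ H ⊆ F ∪ H' := Finset.union_subset_union_right h
    exact Set.union_subset_union (by exact_mod_cast h2) (edgeNbhd_mono h2)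
  let UH : Finset HexE → Set Config := fun H => {ω | cyl (Sg H) ω ⊆ U}
  let A : Finset HexE → Set Config := fun H =>
    {ω | IsConfig ω ∧ IsConfig (ovr F ω) ∧ (∀ e ∈ F, ω e = π e) ∧ ovr F ω ∈ UH H}
  have UHsub : ∀ H, UH H ⊆ U := fun H ω h => h (fun e _ => rfl)
  have UHmono : ∀ H H', H ⊆ H' → UH H ⊆ UH H' := by
    intro H H' h ω hω ω' hω'
    exact hω fun e he => hω' e (Smono H H' h he)
  have hUn : U ⊆ ⋃ H, UH H := by
    intro ω hω
    rw [isOpen_pi_iff] at hU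
    obtain ⟨I, u, h1, h2⟩ := hU ω hω
    refine Set.mem_iUnion.2 ⟨I, ?_⟩
    intro ω' hω'
    apply h2
    intro e he
    rw [hω' e (Or.inl (by simp only [Finset.coe_union]; exact Or.inr he))]
    exact (h1 e he).2
  have hA : ∀ H, μ (A H) ≤ K * μ U := by
    intro H
    have : Finite (Sg H) := Sfin H
    let r : Config → (Sg H → Bool) := fun ω e => ω e
    have rc : ∀ ω, r ⁻¹' {r ω} = cyl (Sg H) ω := by
      intro ω; ext ω'
      simp [r, cyl, funext_iff]
    have rmeas : ∀ ρ, MeasurableSet (r ⁻¹' {ρ}) := by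
      intro ρ
      have : Measurable r := measurable_pi_lambda _ fun e => measurable_pi_apply _
      exact this (MeasurableSet.singleton ρ)
    let V : Set (Sg H → Bool) := {ρ | r ⁻¹' {ρ} ⊆ U}
    have hAV : A H ⊆ ⋃ ρ ∈ V, (A H ∩ {ω | r (ovr F ω) = ρ}) := by
      intro ω hω
      have : r (ovr F ω) ∈ V := by
        change r ⁻¹' {r (ovr F ω)} ⊆ U
        rw [rc]; exact hω.2.2.2
      simp only [Set.mem_iUnion]
      exact ⟨_, this, hω, rfl⟩
    have each : ∀ ρ ∈ V, μ (A H ∩ {ω | r (ovr F ω) = ρ}) ≤ K * μ (r ⁻¹' {ρ}) := by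
      intro ρ _
      rcases (A H ∩ {ω | r (ovr F ω) = ρ}).eq_empty_or_nonempty with h | ⟨σ, hσ, hσr⟩
      · rw [h]; simp
      · change r (ovr F σ) = ρ at hσr
        rw [← hσr, rc]
        refine le_trans (measure_mono ?_) (hb (F ∪ H) Finset.subset_union_left σ (ovr F σ)
          hσ.1 hσ.2.1 ?_)
        · rintro ω ⟨hω, hωr⟩ e he
          by_cases heF : e ∈ F
          · rw [hω.2.2.1 e heF, hσ.2.2.1 e heF]
          · have := congrFun (show r (ovr F ω) = r (ovr F σ) from hωr) ⟨e, he⟩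
            simpa [r, ovr, heF] using this
        · intro e he; simp [ovr, he]
    calc μ (A H) ≤ μ (⋃ ρ ∈ V, (A H ∩ {ω | r (ovr F ω) = ρ})) := measure_mono hAV
      _ ≤ ∑' ρ : V, μ (A H ∩ {ω | r (ovr F ω) = ρ}) :=
          measure_biUnion_le μ (Set.to_countable V) _
      _ ≤ ∑' ρ : V, K * μ (r ⁻¹' {(ρ : Sg H → Bool)}) :=
          ENNReal.tsum_le_tsum fun ρ => each ρ ρ.2
      _ = K * μ (⋃ ρ ∈ V, r ⁻¹' {ρ}) := by
          rw [ENNReal.tsum_mul_left, measure_biUnion (Set.to_countable V) _ (fun ρ _ => rmeas ρ)]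
          intro ρ _ ρ' _ hne
          exact Disjoint.preimage _ (by simpa using hne)
      _ ≤ K * μ U := by
          gcongr
          exact Set.iUnion₂_subset fun ρ hρ => hρ
  have hsub : {ω | IsConfig ω ∧ IsConfig (ovr F ω) ∧ (∀ e ∈ F, ω e = π e) ∧ ovr F ω ∈ U} ⊆
      ⋃ H, A H := by
    rintro ω ⟨h1, h2, h3, h4⟩
    obtain ⟨H, hH⟩ := Set.mem_iUnion.1 (hUn h4)
    exact Set.mem_iUnion.2 ⟨H, h1, h2, h3, hH⟩
  refine (measure_mono hsub).trans ?_
  rw [Directed.measure_iUnion]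
  · exact iSup_le hA
  · intro H H'
    refine ⟨H ∪ H', ?_, ?_⟩
    · exact fun ω h => ⟨h.1, h.2.1, h.2.2.1, UHmono _ _ Finset.subset_union_left h.2.2.2⟩
    · exact fun ω h => ⟨h.1, h.2.1, h.2.2.1, UHmono _ _ Finset.subset_union_right h.2.2.2⟩

theorem null_pull {a b c : ℝ} (ha : 0 < a) (hb : 0 < b) (hc : 0 < c)
    {μ : Measure Config} (hG : IsGibbs a b c μ) (F : Finset HexE) (B : Set Config)
    (hB : μ B = 0) :
    μ {ω | IsConfig ω ∧ IsConfig (ovr F ω) ∧ ovr F ω ∈ B} = 0 := by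
  have := hG.1
  classical
  have hsub : {ω | IsConfig ω ∧ IsConfig (ovr F ω) ∧ ovr F ω ∈ B} ⊆
      ⋃ G : Finset HexE, {ω | IsConfig ω ∧ IsConfig (ovr F ω) ∧
        (∀ e ∈ F, ω e = decide (e ∈ G)) ∧ ovr F ω ∈ B} := by
    rintro ω ⟨h1, h2, h3⟩
    refine Set.mem_iUnion.2 ⟨F.filter (fun e => ω e = true), h1, h2, ?_, h3⟩
    intro e he
    simp [he]
  refine measure_mono_null hsub (measure_iUnion_null fun G => ?_)
  obtain ⟨K, hK, hb⟩ := open_bound ha hb hc hG F (fun e => decide (e ∈ G))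
  by_contra hne
  set p := μ {ω | IsConfig ω ∧ IsConfig (ovr F ω) ∧
        (∀ e ∈ F, ω e = decide (e ∈ G)) ∧ ovr F ω ∈ B} with hp
  have hptop : p ≠ ⊤ := measure_ne_top _ _
  have hr : 0 < p / (K + 1) := ENNReal.div_pos hne (by simp [hK])
  obtain ⟨U, hBU, hUo, hUm⟩ := B.exists_isOpen_lt_of_lt (μ := μ) (p / (K + 1)) (by rwa [hB])
  have h1 : p ≤ K * μ U := by
    refine le_trans (measure_mono ?_) (hb U hUo)
    rintro ω ⟨h1, h2, h3, h4⟩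
    exact ⟨h1, h2, h3, hBU h4⟩
  have h2 : (K + 1) * μ U < p := by
    rw [mul_comm]
    exact (ENNReal.lt_div_iff_mul_lt (by simp) (by simp [hK])).1 hUm
  have h3 : K * μ U ≤ (K + 1) * μ U := by gcongr; simp
  exact absurd (h1.trans h3) (not_le.2 h2)

/-- `m` pairwise disconnected vertices in infinite clusters. -/
def Many (ω : Config) (s : Finset HexV) : Prop :=
  (∀ v ∈ s, v ∈ confSet ω conf001 ∧ (compOf (confSet ω conf001) v).Infinite) ∧
    ∀ v ∈ s, ∀ w ∈ s, v ≠ w → ¬ Conn (confSet ω conf001) v w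

theorem le_num_iff (ω : Config) (m : ℕ) : (m : ℕ∞) ≤ numInfClusters ω conf001 ↔
    ∃ s : Finset HexV, s.card = m ∧ Many ω s := by
  classical
  constructor
  · intro h
    obtain ⟨t, ht, htm⟩ := Set.exists_subset_encard_eq h
    have htf : t.Finite := Set.finite_of_encard_eq_coe htm
    have : ∀ C ∈ t, ∃ v, v ∈ confSet ω conf001 ∧ C = compOf (confSet ω conf001) v :=
      fun C hC => (ht hC).1
    choose! f hf1 hf2 using this
    have hinj : Set.InjOn f t := by
      intro C hC D hD h
      rw [hf2 C hC, hf2 D hD, h]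
    refine ⟨htf.toFinset.image f, ?_, ?_, ?_⟩
    · rw [Finset.card_image_of_injOn (by simpa using hinj)]
      rw [htf.encard_eq_coe_toFinset_card] at htm
      exact_mod_cast htm
    · intro v hv
      simp only [Finset.mem_image, Set.Finite.mem_toFinset] at hv
      obtain ⟨C, hC, rfl⟩ := hv
      exact ⟨hf1 C hC, by rw [← hf2 C hC]; exact (ht hC).2⟩
    · intro v hv w hw hne hcon
      simp only [Finset.mem_image, Set.Finite.mem_toFinset] at hv hw
      obtain ⟨C, hC, rfl⟩ := hv
      obtain ⟨D, hD, rfl⟩ := hw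
      apply hne
      have := compOf_eq hcon
      rw [← hf2 C hC, ← hf2 D hD] at this
      rw [this]
  · rintro ⟨s, rfl, h1, h2⟩
    have hinj : Set.InjOn (compOf (confSet ω conf001)) (s : Set HexV) := by
      intro v hv w hw h
      by_contra hne
      apply h2 v hv w hw hne
      have : w ∈ compOf (confSet ω conf001) w := Conn.rfl
      rw [← h] at this
      exact this
    rw [← Set.encard_coe_eq_coe_finsetCard, ← hinj.encard_image]
    apply Set.encard_le_encard
    rintro _ ⟨v, hv, rfl⟩
    exact ⟨⟨v, (h1 v hv).1, rfl⟩, (h1 v hv).2⟩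

theorem meas_mem (v : HexV) : MeasurableSet {ω : Config | v ∈ confSet ω conf001} := by
  have : {ω : Config | v ∈ confSet ω conf001} =
      ⋂ i, (fun ω : Config => ω (edgesAt v i)) ⁻¹' {conf001 i} := by
    ext ω; simp [confSet, localConf, funext_iff]
  rw [this]
  exact MeasurableSet.iInter fun i => measurable_pi_apply _ (MeasurableSet.singleton _)

def reach (S : Set HexV) (v : HexV) : ℕ → HexV → Prop
  | 0, w => v = w
  | n + 1, w => ∃ u, reach S v n u ∧ adjIn S u w

theorem conn_iff_reach (S : Set HexV) (v w : HexV) : Conn S v w ↔ ∃ n, reach S v n w := by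
  constructor
  · intro h
    induction h with
    | refl => exact ⟨0, rfl⟩
    | tail _ h2 ih => obtain ⟨n, hn⟩ := ih; exact ⟨n + 1, _, hn, h2⟩
  · rintro ⟨n, hn⟩
    induction n generalizing w with
    | zero => cases hn; exact Conn.rfl
    | succ n ih => obtain ⟨u, hu, h⟩ := hn; exact Relation.ReflTransGen.tail (ih u hu) h

theorem meas_reach (v : HexV) (n : ℕ) (w : HexV) :
    MeasurableSet {ω : Config | reach (confSet ω conf001) v n w} := by
  induction n generalizing w with
  | zero => exact MeasurableSet.const _
  | succ n ih =>
    simp only [reach, Set.ofPred_exists]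
    refine MeasurableSet.iUnion fun u => (ih u).inter ?_
    exact (MeasurableSet.const _).inter ((meas_mem u).inter (meas_mem w))

theorem meas_conn (v w : HexV) : MeasurableSet {ω : Config | Conn (confSet ω conf001) v w} := by
  simp only [conn_iff_reach, Set.ofPred_exists]
  exact MeasurableSet.iUnion fun n => meas_reach v n w

theorem meas_inf (v : HexV) :
    MeasurableSet {ω : Config | (compOf (confSet ω conf001) v).Infinite} := by
  have : {ω : Config | (compOf (confSet ω conf001) v).Infinite} =
      ⋂ s : Finset HexV, ⋃ w : HexV, {ω : Config | w ∉ s ∧ Conn (confSet ω conf001) v w} := by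
    ext ω
    simp only [Set.mem_ofPred_eq, Set.mem_iInter, Set.mem_iUnion]
    constructor
    · intro h s
      obtain ⟨w, hw, hws⟩ := h.exists_notMem_finset s
      exact ⟨w, hws, hw⟩
    · intro h hfin
      obtain ⟨w, hw, hc⟩ := h hfin.toFinset
      exact hw (hfin.mem_toFinset.2 hc)
  rw [this]
  exact MeasurableSet.iInter fun s => MeasurableSet.iUnion fun w =>
    (MeasurableSet.const _).inter (meas_conn v w)

theorem meas_num (m : ℕ) :
    MeasurableSet {ω : Config | (m : ℕ∞) ≤ numInfClusters ω conf001} := by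
  simp only [le_num_iff, Set.ofPred_exists]
  refine MeasurableSet.iUnion fun s => (MeasurableSet.const _).inter ?_
  change MeasurableSet {ω : Config | Many ω s}
  simp only [Many, Set.ofPred_and, Set.ofPred_forall]
  refine MeasurableSet.inter ?_ ?_
  · exact MeasurableSet.iInter fun v => MeasurableSet.iInter fun _ =>
      (meas_mem v).inter (meas_inf v)
  · exact MeasurableSet.iInter fun v => MeasurableSet.iInter fun _ => MeasurableSet.iInter fun w =>
      MeasurableSet.iInter fun _ => MeasurableSet.iInter fun _ => (meas_conn v w).compl

def shV (g : ℤ × ℤ) (v : HexV) : HexV := (v.1 + g.1, v.2.1 + g.2, v.2.2)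

theorem shV_neg (g : ℤ × ℤ) (v : HexV) : shV g (shV (-g) v) = v := by
  simp [shV]

theorem shV_neg' (g : ℤ × ℤ) (v : HexV) : shV (-g) (shV g v) = v := by
  simp [shV]

theorem shift_edgesAt (g : ℤ × ℤ) (v : HexV) (i : Fin 3) :
    shiftE g (edgesAt v i) = edgesAt (shV g v) i := by
  obtain ⟨x, y, t⟩ := v
  cases t <;> fin_cases i <;> simp [shiftE, edgesAt, shV] <;> ring

theorem mem_shift (g : ℤ × ℤ) (ω : Config) (v : HexV) :
    v ∈ confSet (shiftConfig g ω) conf001 ↔ shV g v ∈ confSet ω conf001 := by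
  simp [confSet, localConf, funext_iff, shiftConfig, shift_edgesAt]

theorem shift_end1 (g : ℤ × ℤ) (e : HexE) : shV g (end1 e) = end1 (shiftE g e) := rfl

theorem shift_end2 (g : ℤ × ℤ) (e : HexE) : shV g (end2 e) = end2 (shiftE g e) := by
  obtain ⟨x, y, k⟩ := e
  fin_cases k <;> simp [shiftE, end2, shV] <;> ring

theorem adj_shift (g : ℤ × ℤ) {v w : HexV} (h : HexAdj v w) : HexAdj (shV g v) (shV g w) := by
  obtain ⟨h1, e, h2, h3⟩ := h
  refine ⟨fun h => h1 ?_, shiftE g e, ?_, ?_⟩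
  · rw [← shV_neg' g v, h, shV_neg']
  · rw [← shift_end1, ← shift_end2]
    exact h2.imp (fun h => by rw [h]) (fun h => by rw [h])
  · rw [← shift_end1, ← shift_end2]
    exact h3.imp (fun h => by rw [h]) (fun h => by rw [h])

theorem shift_neg (g : ℤ × ℤ) (ω : Config) : shiftConfig (-g) (shiftConfig g ω) = ω := by
  funext e
  simp [shiftConfig, shiftE]

theorem conn_shift (g : ℤ × ℤ) (ω : Config) {v w : HexV}
    (h : Conn (confSet (shiftConfig g ω) conf001) v w) :
    Conn (confSet ω conf001) (shV g v) (shV g w) :=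
  by
    induction h with
    | refl => exact Conn.rfl
    | tail _ h2 ih =>
      exact Relation.ReflTransGen.tail ih
        ⟨adj_shift g h2.1, (mem_shift g ω _).1 h2.2.1, (mem_shift g ω _).1 h2.2.2⟩

theorem many_shift (g : ℤ × ℤ) (ω : Config) (s : Finset HexV)
    (h : Many (shiftConfig g ω) s) : ∃ s' : Finset HexV, s'.card = s.card ∧ Many ω s' := by
  classical
  have hinj : Function.Injective (shV g) := fun v w h => by
    rw [← shV_neg' g v, h, shV_neg']
  refine ⟨s.image (shV g), Finset.card_image_of_injective _ hinj, ?_, ?_⟩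
  · intro v hv
    obtain ⟨u, hu, rfl⟩ := Finset.mem_image.1 hv
    refine ⟨(mem_shift g ω u).1 (h.1 u hu).1, ?_⟩
    refine ((h.1 u hu).2.image hinj.injOn).mono ?_
    rintro _ ⟨w, hw, rfl⟩
    exact conn_shift g ω hw
  · intro v hv w hw hne hc
    obtain ⟨u, hu, rfl⟩ := Finset.mem_image.1 hv
    obtain ⟨u', hu', rfl⟩ := Finset.mem_image.1 hw
    apply h.2 u hu u' hu' (fun e => hne (by rw [e]))
    have := conn_shift (-g) (shiftConfig g ω) (v := shV g u) (w := shV g u')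
      (by rw [shift_neg]; exact hc)
    rwa [shV_neg', shV_neg'] at this

theorem num_shift (g : ℤ × ℤ) (m : ℕ) :
    shiftConfig g ⁻¹' {ω : Config | (m : ℕ∞) ≤ numInfClusters ω conf001} =
      {ω : Config | (m : ℕ∞) ≤ numInfClusters ω conf001} := by
  ext ω
  simp only [Set.mem_preimage, Set.mem_ofPred_eq, le_num_iff]
  constructor
  · rintro ⟨s, hs, hm⟩
    obtain ⟨s', h1, h2⟩ := many_shift g ω s hm
    exact ⟨s', h1.trans hs, h2⟩
  · rintro ⟨s, hs, hm⟩
    obtain ⟨s', h1, h2⟩ := many_shift (-g) (shiftConfig g ω) s (by rwa [shift_neg])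
    exact ⟨s', h1.trans hs, h2⟩

theorem shift_meas (g : ℤ × ℤ) : Measurable (shiftConfig g) :=
  measurable_pi_lambda _ fun e => measurable_pi_apply _

/-- Recurrence along quadrants. -/
theorem recur {μ : Measure Config} [IsProbabilityMeasure μ] (hTI : TransInvariant μ)
    (Q : Config → ℤ → ℤ → Prop) (hQm : ∀ x y, MeasurableSet {ω | Q ω x y})
    (hQs : ∀ g ω x y, Q (shiftConfig g ω) x y ↔ Q ω (x + g.1) (y + g.2))
    (hQ : ∀ᵐ ω ∂μ, ∃ x y, Q ω x y) (ε : ℤ) (hε : ε = 1 ∨ ε = -1) (n : ℤ) :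
    ∀ᵐ ω ∂μ, ∃ x y, n ≤ ε * x ∧ n ≤ ε * y ∧ Q ω x y := by
  let E : ℤ → Set Config := fun k => {ω | ∃ x y, k ≤ ε * x ∧ k ≤ ε * y ∧ Q ω x y}
  have hEm : ∀ k, MeasurableSet (E k) := by
    intro k
    simp only [E, Set.ofPred_exists]
    exact MeasurableSet.iUnion fun x => MeasurableSet.iUnion fun y =>
      (MeasurableSet.const _).inter ((MeasurableSet.const _).inter (hQm x y))
  have hεε : ε * ε = 1 := by rcases hε with rfl | rfl <;> norm_num
  have hEs : ∀ k, μ (E k) = μ (E n) := by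
    intro k
    have h := hTI (ε * (n - k), ε * (n - k))
    have hpre : shiftConfig (ε * (n - k), ε * (n - k)) ⁻¹' (E k) = E n := by
      ext ω
      simp only [E, Set.mem_preimage, Set.mem_ofPred_eq, hQs]
      constructor
      · rintro ⟨x, y, h1, h2, h3⟩
        refine ⟨_, _, ?_, ?_, h3⟩
        · linear_combination h1 - (n - k) * hεε
        · linear_combination h2 - (n - k) * hεε
      · rintro ⟨x, y, h1, h2, h3⟩
        refine ⟨x - ε * (n - k), y - ε * (n - k), ?_, ?_, by simpa using h3⟩
        · linear_combination h1 + (n - k) * hεε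
        · linear_combination h2 + (n - k) * hεε
    rw [← hpre, ← Measure.map_apply (shift_meas _) (hEm k), h]
  have hmono : Monotone fun k : ℕ => E (-(k : ℤ)) := by
    rintro k l hkl ω ⟨x, y, h1, h2, h3⟩
    have : (k : ℤ) ≤ l := by exact_mod_cast hkl
    exact ⟨x, y, by omega, by omega, h3⟩
  have hU : μ (⋃ k : ℕ, E (-(k : ℤ))) = μ (E n) := by
    rw [hmono.measure_iUnion]
    simp [hEs]
  have h1 : μ (⋃ k : ℕ, E (-(k : ℤ))) = 1 := by
    rw [prob_compl_eq_zero_iff (MeasurableSet.iUnion fun k => hEm _) |>.symm]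
    refine measure_mono_null ?_ hQ
    intro ω hω
    simp only [Set.mem_compl_iff, Set.mem_ofPred_eq] at *
    rintro ⟨x, y, h⟩
    apply hω
    refine Set.mem_iUnion.2 ⟨(ε * x).natAbs + (ε * y).natAbs, x, y, ?_, ?_, h⟩ <;>
    · push_cast
      have := abs_nonneg (ε * x); have := abs_nonneg (ε * y)
      have := neg_abs_le (ε * x); have := neg_abs_le (ε * y)
      linarith
  rw [hU] at h1
  have : ∀ᵐ ω ∂μ, ω ∈ E n := (mem_ae_iff_prob_eq_one (hEm n)).2 h1
  exact this

theorem meas_lower (x y : ℤ) : MeasurableSet {ω | lowerQ ω x y} :=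
  (meas_mem _).inter ((meas_mem _).union (meas_mem _))

theorem meas_upper (x y : ℤ) : MeasurableSet {ω | upperQ ω x y} :=
  (meas_mem _).inter ((meas_mem _).union (meas_mem _))

theorem shift_lower (g : ℤ × ℤ) (ω : Config) (x y : ℤ) :
    lowerQ (shiftConfig g ω) x y ↔ lowerQ ω (x + g.1) (y + g.2) := by
  simp only [lowerQ, mem_shift, shV]
  rw [add_right_comm x 1, add_right_comm y 1]

theorem shift_upper (g : ℤ × ℤ) (ω : Config) (x y : ℤ) :
    upperQ (shiftConfig g ω) x y ↔ upperQ ω (x + g.1) (y + g.2) := by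
  simp only [upperQ, mem_shift, shV]
  rw [sub_add_eq_add_sub, sub_add_eq_add_sub]

theorem exists_lower {ω : Config} (h : 1 ≤ numInfClusters ω conf001) : ∃ x y, lowerQ ω x y := by
  by_contra hcon
  push Not at hcon
  have h' : ((1 : ℕ) : ℕ∞) ≤ numInfClusters ω conf001 := by simpa using h
  rw [le_num_iff] at h'
  obtain ⟨s, hs, hm⟩ := h'
  obtain ⟨v, rfl⟩ := Finset.card_eq_one.1 hs
  have hinf := (hm.1 v (by simp)).2
  apply hinf
  have step : ∀ u w, adjIn (confSet ω conf001) u w → u.1 = w.1 ∧ u.2.1 = w.2.1 := by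
    rintro u w ⟨⟨hne, e, h1, h2⟩, hu, hw⟩
    obtain ⟨p, q, k⟩ := e
    have hno := hcon p q
    simp only [lowerQ, not_and, not_or] at hno
    rcases h1 with rfl | rfl <;> rcases h2 with rfl | rfl
    · exact absurd rfl hne
    · fin_cases k
      · simp [end1, end2]
      · exact absurd hw (hno hu).1
      · exact absurd hw (hno hu).2
    · fin_cases k
      · simp [end1, end2]
      · exact absurd hu (hno hw).1
      · exact absurd hu (hno hw).2
    · exact absurd rfl hne
  refine Set.Finite.subset (Set.toFinite ({(v.1, v.2.1, true), (v.1, v.2.1, false)} : Set HexV)) ?_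
  intro w hw
  have : v.1 = w.1 ∧ v.2.1 = w.2.1 := by
    change Conn _ _ _ at hw
    induction hw with
    | refl => exact ⟨rfl, rfl⟩
    | tail _ h2 ih =>
      have := step _ _ h2
      exact ⟨ih.1.trans this.1, ih.2.trans this.2⟩
  obtain ⟨x, y, t⟩ := w
  obtain ⟨h1, h2⟩ := this
  simp only at h1 h2
  rw [h1, h2]
  cases t <;> simp

theorem exists_upper {ω : Config} (h : 1 ≤ numInfClusters ω conf001) : ∃ x y, upperQ ω x y := by
  obtain ⟨x, y, h1, h2 | h2⟩ := exists_lower h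
  · exact ⟨x + 1, y, h2, Or.inl (by simpa using h1)⟩
  · exact ⟨x, y + 1, h2, Or.inr (by simpa using h1)⟩

theorem exists_box {ω : Config} {k : ℕ} (h : numInfClusters ω conf001 = k) :
    ∃ n : ℕ, ∀ C, IsCluster ω conf001 C → C.Infinite →
      ∃ v ∈ C, |v.1| ≤ (n : ℤ) ∧ |v.2.1| ≤ (n : ℤ) := by
  have hfin : {C : Set HexV | IsCluster ω conf001 C ∧ C.Infinite}.Finite :=
    Set.finite_of_encard_eq_coe h
  have : ∀ C : Set HexV, ∃ n : ℕ, C.Infinite → ∃ v ∈ C, |v.1| ≤ (n : ℤ) ∧ |v.2.1| ≤ (n : ℤ) := by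
    intro C
    by_cases hC : C.Infinite
    · obtain ⟨v, hv⟩ := hC.nonempty
      refine ⟨v.1.natAbs + v.2.1.natAbs, fun _ => ⟨v, hv, ?_, ?_⟩⟩ <;> push_cast <;>
        linarith [abs_nonneg v.1, abs_nonneg v.2.1]
    · exact ⟨0, fun h => absurd h hC⟩
  choose f hf using this
  obtain ⟨n, hn⟩ := (hfin.image f).bddAbove
  refine ⟨n, fun C h1 h2 => ?_⟩
  obtain ⟨v, hv, h3, h4⟩ := hf C h2
  have : f C ≤ n := hn ⟨C, ⟨h1, h2⟩, rfl⟩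
  have : (f C : ℤ) ≤ n := by exact_mod_cast this
  exact ⟨v, hv, h3.trans this, h4.trans this⟩

theorem no_finite {a b c : ℝ} (ha : 0 < a) (hb : 0 < b) (hc : 0 < c)
    {μ : Measure Config} (hG : IsGibbs a b c μ) (hTI : TransInvariant μ) (k : ℕ) (hk : 2 ≤ k)
    (hN : ∀ᵐ ω ∂μ, numInfClusters ω conf001 = k) : False := by
  have := hG.1
  have h1k : (1 : ℕ∞) ≤ k := by exact_mod_cast (by omega : 1 ≤ k)
  have hlow : ∀ᵐ ω ∂μ, ∀ n : ℕ, ∃ x y, (n : ℤ) + 1 ≤ -1 * x ∧ (n : ℤ) + 1 ≤ -1 * y ∧ lowerQ ω x y := by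
    rw [ae_all_iff]
    intro n
    refine recur hTI lowerQ meas_lower shift_lower ?_ (-1) (Or.inr rfl) _
    filter_upwards [hN] with ω hω
    exact exists_lower (by rw [hω]; exact h1k)
  have hupp : ∀ᵐ ω ∂μ, ∀ n : ℕ, ∃ x y, (n : ℤ) + 1 ≤ 1 * x ∧ (n : ℤ) + 1 ≤ 1 * y ∧ upperQ ω x y := by
    rw [ae_all_iff]
    intro n
    refine recur hTI upperQ meas_upper shift_upper ?_ 1 (Or.inl rfl) _
    filter_upwards [hN] with ω hω
    exact exists_upper (by rw [hω]; exact h1k)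
  have hconf : ∀ᵐ ω ∂μ, IsConfig ω := by
    have hm : MeasurableSet {ω : Config | IsConfig ω} := by
      simp only [isConfig_iff, Set.ofPred_forall]
      refine MeasurableSet.iInter fun x => MeasurableSet.iInter fun y => ?_
      have hp : ∀ e : HexE, MeasurableSet {ω : Config | ω e = true} := fun e =>
        measurableSet_eq_fun (measurable_pi_apply e) measurable_const
      have hok : ∀ e f g : HexE, MeasurableSet {ω : Config | okAt (ω e) (ω f) (ω g)} :=
        fun e f g => ((hp e).union ((hp f).union (hp g))).inter
          ((hp e).inter ((hp f).inter (hp g))).compl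
      exact (hok _ _ _).inter (hok _ _ _)
    exact (mem_ae_iff_prob_eq_one hm).2 hG.2.1
  have hnull : ∀ X1 Y1 X2 Y2 : ℤ, ∀ᵐ ω ∂μ, ¬ (IsConfig ω ∧
      IsConfig (ovr (rectF X1 Y1 X2 Y2) ω) ∧
      ovr (rectF X1 Y1 X2 Y2) ω ∈ {ω | ¬ numInfClusters ω conf001 = k}) := by
    intro X1 Y1 X2 Y2
    rw [ae_iff]
    simp only [not_not]
    exact null_pull ha hb hc hG _ _ hN
  have hnull' : ∀ᵐ ω ∂μ, ∀ X1 Y1 X2 Y2 : ℤ, ¬ (IsConfig ω ∧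
      IsConfig (ovr (rectF X1 Y1 X2 Y2) ω) ∧
      ovr (rectF X1 Y1 X2 Y2) ω ∈ {ω | ¬ numInfClusters ω conf001 = k}) := by
    simp only [ae_all_iff]
    exact hnull
  have : ∀ᵐ ω ∂μ, False := by
    filter_upwards [hN, hlow, hupp, hconf, hnull'] with ω h1 h2 h3 h4 h5
    obtain ⟨n, hn⟩ := exists_box h1
    obtain ⟨X1, Y1, hx1, hy1, hL⟩ := h2 n
    obtain ⟨X2, Y2, hx2, hy2, hU⟩ := h3 n
    apply h5 X1 Y1 X2 Y2
    refine ⟨h4, over_isConfig h4 _ _ _ _ ((mem_conf_true _ _ _).1 hL.1).1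
      ((mem_conf_false _ _ _).1 hU.1).1, ?_⟩
    have hle := over_num_le_one (by omega) (by omega) hL hU (by
      intro C hC hCi
      obtain ⟨v, hv, ha, hb⟩ := hn C hC hCi
      rw [abs_le] at ha hb
      exact ⟨v, hv, by omega, by omega, by omega, by omega⟩)
    intro heq
    rw [heq] at hle
    have : k ≤ 1 := by exact_mod_cast hle
    omega
  rw [ae_iff] at this
  simp at this

end OneTwo

/-- For an ergodic translation-invariant Gibbs measure, the number of infinite
`{001}`-clusters is almost surely constant, equal to `0`, `1`, or `∞`. -/
theorem number_of_infinite_001_clusters_zero_one_infinity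
    (a b c : ℝ) (ha : 0 < a) (hb : 0 < b) (hc : 0 < c)
    (μ : Measure Config) (hGibbs : IsGibbs a b c μ) (hTI : TransInvariant μ)
    (hErg : IsErgodicTI μ) :
    ∃ κ : ℕ∞, (κ = 0 ∨ κ = 1 ∨ κ = ⊤) ∧
      μ {ω : Config | numInfClusters ω conf001 = κ} = 1 := by 
  have := hGibbs.1
  have h01 : ∀ m : ℕ, μ {ω | (m : ℕ∞) ≤ numInfClusters ω conf001} = 0 ∨
      μ {ω | (m : ℕ∞) ≤ numInfClusters ω conf001} = 1 := fun m =>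
    hErg _ (OneTwo.meas_num m) (fun g => OneTwo.num_shift g m)
  by_cases hall : ∀ m : ℕ, μ {ω | (m : ℕ∞) ≤ numInfClusters ω conf001} = 1
  · refine ⟨⊤, Or.inr (Or.inr rfl), ?_⟩
    have : {ω | numInfClusters ω conf001 = ⊤} =
        ⋂ m : ℕ, {ω | (m : ℕ∞) ≤ numInfClusters ω conf001} := by
      ext ω
      simp [ENat.eq_top_iff_forall_ge]
    have h : ∀ᵐ ω ∂μ, ∀ m : ℕ, (m : ℕ∞) ≤ numInfClusters ω conf001 := by
      rw [ae_all_iff]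
      exact fun m => (mem_ae_iff_prob_eq_one (OneTwo.meas_num m)).2 (hall m)
    rw [this]
    refine (mem_ae_iff_prob_eq_one (MeasurableSet.iInter fun m => OneTwo.meas_num m)).1 ?_
    filter_upwards [h] with ω hω
    exact Set.mem_iInter.2 hω
  · push Not at hall
    classical
    have hm1 := Nat.find_spec hall
    have hmin := fun j => Nat.find_min (H := hall) (m := j)
    generalize Nat.find hall = m at *
    have hm0 : m ≠ 0 := by
      rintro rfl
      apply hm1
      simp
    obtain ⟨k, rfl⟩ := Nat.exists_eq_succ_of_ne_zero hm0
    have hk := hmin k (Nat.lt_succ_self k)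
    push Not at hk
    have hz := (h01 (k + 1)).resolve_right hm1
    have hset : {ω | numInfClusters ω conf001 = (k : ℕ∞)} =
        {ω | (k : ℕ∞) ≤ numInfClusters ω conf001} \
          {ω | ((k + 1 : ℕ) : ℕ∞) ≤ numInfClusters ω conf001} := by
      ext ω
      simp only [Set.mem_ofPred_eq, Set.mem_sdiff, not_le]
      rw [Nat.cast_add, Nat.cast_one, ENat.lt_add_one_iff (ENat.natCast_ne_top k)]
      exact ⟨fun h => ⟨h.ge, h.le⟩, fun h => le_antisymm h.2 h.1⟩
    have hone : μ {ω | numInfClusters ω conf001 = (k : ℕ∞)} = 1 := by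
      rw [hset, measure_sdiff_null hz, hk]
    refine ⟨k, ?_, hone⟩
    by_cases hk2 : 2 ≤ k
    · exfalso
      refine OneTwo.no_finite ha hb hc hGibbs hTI k hk2 ?_
      refine (mem_ae_iff_prob_eq_one ?_).2 hone
      rw [hset]
      exact (OneTwo.meas_num k).diff (OneTwo.meas_num (k + 1))
    · interval_cases k <;> simp
end

section
/- Let Y be a finite set with at least three elements. If 𝒫 is a compatible collection of 3-partitions of Y, then |𝒫| ≤ |Y| − 2. -/
open MeasureTheory

lemma cp_key {ι β : Type*} (n : ℕ) : ∀ (S : Finset ι) (A B : ι → Set β) (Z : Set β),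
    S.card = n → Z.Finite → Z.Nonempty →
    (∀ i ∈ S, (A i).Nonempty ∧ (B i).Nonempty ∧ Disjoint (A i) (B i) ∧ A i ⊆ Z ∧ B i ⊆ Z) →
    (∀ i ∈ S, ∀ j ∈ S, i ≠ j → Disjoint (A i ∪ B i) (A j ∪ B j) ∨ A i ∪ B i ⊆ A j ∨
      A i ∪ B i ⊆ B j ∨ A j ∪ B j ⊆ A i ∨ A j ∪ B j ⊆ B i) → n + 1 ≤ Z.ncard := by
  classical
  induction n with
  | zero =>
    intro S A B Z _ hf hne _ _
    exact (Set.ncard_pos hf).2 hne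
  | succ n ih =>
    intro S A B Z hS hf hne h1 h2
    have hSne : S.Nonempty := by
      rw [← Finset.card_pos]; omega
    obtain ⟨i, hi, hmin⟩ := Finset.exists_min_image S (fun i => (A i ∪ B i).ncard) hSne
    obtain ⟨⟨a, ha⟩, ⟨b, hb⟩, hd, hAZ, hBZ⟩ := h1 i hi
    have hab : a ≠ b := by
      rintro rfl
      exact Set.disjoint_left.1 hd ha hb
    have hno : ∀ j ∈ S, ¬ (A j ∪ B j ⊂ A i ∪ B i) := fun j hj hlt => by
      have := Set.ncard_lt_ncard hlt (hf.subset (Set.union_subset hAZ hBZ))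
      have := hmin j hj
      omega
    have h3 : ∀ j ∈ S, i ≠ j → Disjoint (A i ∪ B i) (A j ∪ B j) ∨ A i ∪ B i ⊆ A j ∨
        A i ∪ B i ⊆ B j := by
      intro j hj hij
      rcases h2 i hi j hj hij with h | h | h | h | h
      · exact Or.inl h
      · exact Or.inr (Or.inl h)
      · exact Or.inr (Or.inr h)
      · exact absurd ⟨h.trans Set.subset_union_left, fun h' =>
          Set.disjoint_left.1 hd (h (h' (Or.inr hb))) hb⟩ (hno j hj)
      · exact absurd ⟨h.trans Set.subset_union_right, fun h' =>
          Set.disjoint_left.1 hd ha (h (h' (Or.inl ha)))⟩ (hno j hj)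
    have hrec := ih (S.erase i) (fun j => A j \ {a}) (fun j => B j \ {a}) (Z \ {a})
      (by rw [Finset.card_erase_of_mem hi, hS]; rfl) (hf.subset Set.sdiff_subset)
      ⟨b, hBZ hb, fun h => hab h.symm⟩
      (by
        intro j hj
        obtain ⟨hji, hj⟩ := Finset.mem_erase.1 hj
        obtain ⟨⟨x, hx⟩, ⟨y, hy⟩, hdj, hA, hB⟩ := h1 j hj
        refine ⟨?_, ?_, hdj.mono Set.sdiff_subset Set.sdiff_subset,
          Set.sdiff_subset_sdiff_left hA, Set.sdiff_subset_sdiff_left hB⟩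
        · by_cases hxa : x = a
          · subst hxa
            rcases h3 j hj (Ne.symm hji) with h | h | h
            · exact absurd (Or.inl hx) (Set.disjoint_left.1 h (Or.inl ha))
            · exact ⟨b, h (Or.inr hb), fun h => hab h.symm⟩
            · exact absurd (h (Or.inl ha)) (Set.disjoint_left.1 hdj hx)
          · exact ⟨x, hx, hxa⟩
        · by_cases hya : y = a
          · subst hya
            rcases h3 j hj (Ne.symm hji) with h | h | h
            · exact absurd (Or.inr hy) (Set.disjoint_left.1 h (Or.inl ha))
            · exact absurd hy (Set.disjoint_left.1 hdj (h (Or.inl ha)))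
            · exact ⟨b, h (Or.inr hb), fun h => hab h.symm⟩
          · exact ⟨y, hy, hya⟩)
      (by
        intro j hj k hk hjk
        simp only [← Set.union_sdiff_distrib]
        rcases h2 j (Finset.mem_of_mem_erase hj) k (Finset.mem_of_mem_erase hk) hjk
          with h | h | h | h | h
        · exact Or.inl (h.mono Set.sdiff_subset Set.sdiff_subset)
        · exact Or.inr (Or.inl (Set.sdiff_subset_sdiff_left h))
        · exact Or.inr (Or.inr (Or.inl (Set.sdiff_subset_sdiff_left h)))
        · exact Or.inr (Or.inr (Or.inr (Or.inl (Set.sdiff_subset_sdiff_left h))))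
        · exact Or.inr (Or.inr (Or.inr (Or.inr (Set.sdiff_subset_sdiff_left h)))))
    have := Set.ncard_sdiff_singleton_add_one (hAZ ha) hf
    omega

lemma cp_root {α : Type*} {Y : Set α} {P : Set (Set α)} (h : IsThreePartition Y P) {y : α}
    (hy : y ∈ Y) : ∃ R A B : Set α, P = {R, A, B} ∧ y ∈ R ∧ A.Nonempty ∧ B.Nonempty ∧
      Disjoint R A ∧ Disjoint R B ∧ Disjoint A B ∧ R ∪ A ∪ B = Y := by
  obtain ⟨P₁, P₂, P₃, rfl, n1, n2, n3, d12, d13, d23, rfl⟩ := h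
  rcases hy with (hy | hy) | hy
  · exact ⟨P₁, P₂, P₃, rfl, hy, n2, n3, d12, d13, d23, rfl⟩
  · exact ⟨P₂, P₁, P₃, Set.insert_comm _ _ _, hy, n1, n3, d12.symm, d23, d13, by
      rw [Set.union_comm P₂ P₁]⟩
  · refine ⟨P₃, P₁, P₂, ?_, hy, n1, n2, d13.symm, d23.symm, d12, ?_⟩
    · rw [Set.insert_comm P₃ P₁, Set.pair_comm P₃ P₂]
    · rw [Set.union_assoc, Set.union_comm]

lemma cp_pair {α : Type*} {Y R A B R' A' B' : Set α} {y : α}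
    (hy : y ∈ R) (hA : A.Nonempty) (hB : B.Nonempty)
    (hRA : Disjoint R A) (hRB : Disjoint R B) (hAB : Disjoint A B) (hU : R ∪ A ∪ B = Y)
    (hy' : y ∈ R') (hA' : A'.Nonempty) (hB' : B'.Nonempty)
    (hRA' : Disjoint R' A') (hRB' : Disjoint R' B') (hAB' : Disjoint A' B')
    (hU' : R' ∪ A' ∪ B' = Y)
    (h : CompatiblePartitions ({R, A, B} : Set (Set α)) {R', A', B'}) :
    Disjoint (A ∪ B) (A' ∪ B') ∨ A ∪ B ⊆ A' ∨
      A ∪ B ⊆ B' ∨ A' ∪ B' ⊆ A ∨ A' ∪ B' ⊆ B := by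
  have e1 : R' ≠ A' := fun e => Set.disjoint_left.1 hRA' hy' (e ▸ hy')
  have e2 : R' ≠ B' := fun e => Set.disjoint_left.1 hRB' hy' (e ▸ hy')
  have e3 : A' ≠ B' := fun e => by
    obtain ⟨x, hx⟩ := hA'
    exact Set.disjoint_left.1 hAB' hx (e ▸ hx)
  have yA : y ∉ A := Set.disjoint_left.1 hRA hy
  have yB : y ∉ B := Set.disjoint_left.1 hRB hy
  obtain ⟨P, hP, Q, hQ, h⟩ := h
  -- elements outside `P` are in `Q`
  have hPQ : ∀ x ∈ Y, x ∉ P → x ∈ Q := by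
    intro x hx hxP
    rw [← hU'] at hx
    by_contra hxQ
    rcases hx with (hx | hx) | hx
    · exact hxP (h R' (by simp) (fun e => hxQ (e ▸ hx)) hx)
    · exact hxP (h A' (by simp) (fun e => hxQ (e ▸ hx)) hx)
    · exact hxP (h B' (by simp) (fun e => hxQ (e ▸ hx)) hx)
  have hAY : ∀ x ∈ A ∪ B, x ∈ Y ∧ x ∉ R := by
    rintro x (hx | hx)
    · exact ⟨hU ▸ Or.inl (Or.inr hx), Set.disjoint_right.1 hRA hx⟩
    · exact ⟨hU ▸ Or.inr hx, Set.disjoint_right.1 hRB hx⟩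
  simp only [Set.mem_insert_iff, Set.mem_singleton_iff] at hP hQ
  rcases hP with rfl | hP
  · have hs : A ∪ B ⊆ Q := fun x hx => hPQ x (hAY x hx).1 (hAY x hx).2
    rcases hQ with rfl | rfl | rfl
    · left
      exact (Set.disjoint_union_right.2 ⟨hRA', hRB'⟩).mono_left hs
    · exact Or.inr (Or.inl hs)
    · exact Or.inr (Or.inr (Or.inl hs))
  · have yP : y ∉ P := by rcases hP with rfl | rfl <;> assumption
    have yQ : Q = R' := by
      by_contra hne
      exact yP (h R' (by simp) (Ne.symm hne) hy')
    subst yQ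
    have hs : A' ∪ B' ⊆ P := Set.union_subset (h A' (by simp) e1.symm) (h B' (by simp) e2.symm)
    rcases hP with rfl | rfl
    · exact Or.inr (Or.inr (Or.inr (Or.inl hs)))
    · exact Or.inr (Or.inr (Or.inr (Or.inr hs)))

/-- Burton–Keane: a compatible collection of 3-partitions of a finite set `Y`
with at least three elements has at most `|Y| - 2` members. -/
theorem compatible_partitions_card_le {α : Type*} (Y : Set α) (hYfin : Y.Finite)
    (hY : 3 ≤ Y.ncard) (Ps : Set (Set (Set α)))
    (hpart : ∀ P ∈ Ps, IsThreePartition Y P)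
    (hcomp : ∀ P ∈ Ps, ∀ Q ∈ Ps, P ≠ Q → CompatiblePartitions P Q) :
    Ps.ncard ≤ Y.ncard - 2 := by
  classical
  by_cases hfin : Ps.Finite
  swap
  · rw [Set.Infinite.ncard hfin]; exact Nat.zero_le _
  obtain ⟨y, hy⟩ : Y.Nonempty := (Set.ncard_pos hYfin).1 (by omega)
  have hc : ∀ P : Set (Set α), ∃ R A B : Set α, P ∈ Ps → (P = {R, A, B} ∧ y ∈ R ∧ A.Nonempty ∧
      B.Nonempty ∧ Disjoint R A ∧ Disjoint R B ∧ Disjoint A B ∧ R ∪ A ∪ B = Y) := by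
    intro P
    by_cases hP : P ∈ Ps
    · obtain ⟨R, A, B, h⟩ := cp_root (hpart P hP) hy
      exact ⟨R, A, B, fun _ => h⟩
    · exact ⟨∅, ∅, ∅, fun h => absurd h hP⟩
  choose R A B hR using hc
  have hcard := Set.ncard_sdiff_singleton_add_one hy hYfin
  have := cp_key Ps.ncard hfin.toFinset A B (Y \ {y})
    (Set.ncard_eq_toFinset_card Ps hfin).symm (hYfin.subset Set.sdiff_subset)
    ((Set.ncard_pos (hYfin.subset Set.sdiff_subset)).1 (by omega))
    (by
      intro P hP
      obtain ⟨_, hyR, hA, hB, d1, d2, d3, hU⟩ := hR P (hfin.mem_toFinset.1 hP)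
      refine ⟨hA, hB, d3, fun x hx => ⟨hU ▸ Or.inl (Or.inr hx), ?_⟩,
        fun x hx => ⟨hU ▸ Or.inr hx, ?_⟩⟩
      · rintro rfl
        exact Set.disjoint_left.1 d1 hyR hx
      · rintro rfl
        exact Set.disjoint_left.1 d2 hyR hx)
    (by
      intro P hP Q hQ hPQ
      have hP := hfin.mem_toFinset.1 hP
      have hQ := hfin.mem_toFinset.1 hQ
      have hc := hcomp P hP Q hQ hPQ
      obtain ⟨e, hyR, hA, hB, d1, d2, d3, hU⟩ := hR P hP
      obtain ⟨e', hyR', hA', hB', d1', d2', d3', hU'⟩ := hR Q hQ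
      have hc : CompatiblePartitions ({R P, A P, B P} : Set (Set α)) {R Q, A Q, B Q} := by
        rw [← e, ← e']; exact hc
      exact cp_pair hyR hA hB d1 d2 d3 hU hyR' hA' hB' d1' d2' d3' hU' hc)
  omega
end

section
/- For every 1-2 model configuration ω ∈ Ω and every n ≥ 1, there exists a 1-2 model configuration ω′ ∈ Ω such that ω′(e) = ω(e) for every edge e both of whose endpoints lie outside the box B_{n+4}, and every vertex of the box B_n has local configuration {001} in ω′. -/
open MeasureTheory

def fbIn (N x y : ℤ) : Prop := (-N ≤ x ∧ x ≤ N) ∧ (-N ≤ y ∧ y ≤ N)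

open Classical in
noncomputable def fbB (ω : Config) (N x y : ℤ) : Bool :=
  if fbIn N x y ∧ fbIn N (x+1) y then
    decide ((x = N - 1 ∧ y = N) ∨ (x = -N ∧ y = -N)) else ω (x, y, 1)

open Classical in
noncomputable def fbC (ω : Config) (N x y : ℤ) : Bool :=
  if fbIn N x y ∧ fbIn N x (y+1) then
    decide ((x = N - 1 ∧ y = N - 1) ∨ (x = -N + 1 ∧ y = -N)) else ω (x, y, 2)

open Classical in
noncomputable def fbA (ω : Config) (N x y : ℤ) : Bool :=
  if fbIn N x y then
    !((fbB ω N x y && fbC ω N x y) || (fbB ω N (x-1) y && fbC ω N x (y-1)))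
  else ω (x, y, 0)

noncomputable def fbW (ω : Config) (N : ℤ) : Config := fun e =>
  ![fbA ω N e.1 e.2.1, fbB ω N e.1 e.2.1, fbC ω N e.1 e.2.1] e.2.2

theorem fb_card (f : Fin 3 → Bool) :
    (1 ≤ (Finset.univ.filter fun i : Fin 3 => f i = true).card ∧
    (Finset.univ.filter fun i : Fin 3 => f i = true).card ≤ 2) ↔
    ((f 0 || f 1 || f 2) = true ∧ (f 0 && f 1 && f 2) = false) := by
  revert f; decide

theorem fb_isConfig (ω : Config) : IsConfig ω ↔ ∀ x y : ℤ,
    ((ω (x,y,0) || ω (x,y,1) || ω (x,y,2)) = true ∧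
      (ω (x,y,0) && ω (x,y,1) && ω (x,y,2)) = false) ∧
    ((ω (x,y,0) || ω (x-1,y,1) || ω (x,y-1,2)) = true ∧
      (ω (x,y,0) && ω (x-1,y,1) && ω (x,y-1,2)) = false) := by
  unfold IsConfig
  simp only [fb_card]
  constructor
  · intro h x y
    exact ⟨by simpa [localConf, edgesAt] using h (x,y,true),
      by simpa [localConf, edgesAt] using h (x,y,false)⟩
  · rintro h ⟨x, y, t⟩
    cases t
    · simpa [localConf, edgesAt] using (h x y).2
    · simpa [localConf, edgesAt] using (h x y).1

theorem fb_key (ω : Config) (N x y : ℤ) (hN : 5 ≤ N) (h : fbIn N x y) :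
    ¬ (fbB ω N x y = true ∧ fbC ω N x y = true ∧ fbB ω N (x-1) y = false ∧
      fbC ω N x (y-1) = false) ∧
    ¬ (fbB ω N x y = false ∧ fbC ω N x y = false ∧ fbB ω N (x-1) y = true ∧
      fbC ω N x (y-1) = true) := by
  unfold fbB fbC
  unfold fbIn at *
  simp only [sub_add_cancel]
  constructor
  · rintro ⟨h1, h2, h3, h4⟩
    split_ifs at h1 h2 h3 h4 <;>
      (try simp only [decide_eq_true_eq, decide_eq_false_iff_not] at h1 h2 h3 h4) <;> omega
  · rintro ⟨h1, h2, h3, h4⟩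
    split_ifs at h1 h2 h3 h4 <;>
      (try simp only [decide_eq_true_eq, decide_eq_false_iff_not] at h1 h2 h3 h4) <;> omega

theorem fb_B_zero (ω : Config) (n x y : ℤ) (h : fbIn n x y ∨ fbIn n (x+1) y) :
    fbB ω (n+4) x y = false := by
  unfold fbB
  unfold fbIn at *
  rw [if_pos (by omega), decide_eq_false_iff_not]
  omega

theorem fb_C_zero (ω : Config) (n x y : ℤ) (h : fbIn n x y ∨ fbIn n x (y+1)) :
    fbC ω (n+4) x y = false := by
  unfold fbC
  unfold fbIn at *
  rw [if_pos (by omega), decide_eq_false_iff_not]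
  omega

theorem fb_A_one (ω : Config) (n x y : ℤ) (h : fbIn n x y) :
    fbA ω (n+4) x y = true := by
  unfold fbA
  rw [if_pos (by unfold fbIn at *; omega), fb_B_zero ω n x y (Or.inl h),
    fb_B_zero ω n (x-1) y (Or.inr (by simpa using h))]
  simp

theorem fill_box_with_001
    (ω : Config) (hω : IsConfig ω) (n : ℕ) (hn : 1 ≤ n) :
    ∃ ω' : Config, IsConfig ω' ∧
      (∀ e : HexE, end1 e ∉ box (n + 4) 0 0 → end2 e ∉ box (n + 4) 0 0 → ω' e = ω e) ∧
      (∀ v ∈ box n 0 0, localConf ω' v = conf001) := by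
  have hbox : ∀ (m : ℕ) (x y : ℤ) (t : Bool), (x, y, t) ∈ box m 0 0 ↔ fbIn m x y := by
    intro m x y t
    simp [box, fbIn, abs_le]
  refine ⟨fbW ω ((n:ℤ)+4), ?_, ?_, ?_⟩
  · rw [fb_isConfig] at hω ⊢
    intro x y
    have hxy := hω x y
    simp only [fbW, Matrix.cons_val]
    by_cases h : fbIn ((n:ℤ)+4) x y
    · have key := fb_key ω ((n:ℤ)+4) x y (by omega) h
      rw [fbA, if_pos h]
      revert key
      generalize fbB ω ((n:ℤ)+4) x y = r
      generalize fbC ω ((n:ℤ)+4) x y = u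
      generalize fbB ω ((n:ℤ)+4) (x-1) y = l
      generalize fbC ω ((n:ℤ)+4) x (y-1) = d
      revert r u l d
      decide
    · rw [fbA, fbB, fbC, fbB, fbC, if_neg h, if_neg (by tauto), if_neg (by tauto),
        if_neg (by simp [h]), if_neg (by simp [h])]
      exact hxy
  · rintro ⟨x, y, k⟩ h1 h2
    have h1' : ¬ fbIn ((n:ℤ)+4) x y := by
      simpa [end1, hbox] using h1
    fin_cases k
    · simp [fbW, fbA, h1']
    · simp [fbW, fbB, h1']
    · simp [fbW, fbC, h1']
  · rintro ⟨x, y, t⟩ h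
    rw [hbox] at h
    funext i
    cases t <;> fin_cases i <;> simp [localConf, edgesAt, conf001, fbW]
    · exact fb_A_one ω n x y h
    · exact fb_B_zero ω n _ y (Or.inr (by simpa using h))
    · exact fb_C_zero ω n x _ (Or.inr (by simpa using h))
    · exact fb_A_one ω n x y h
    · exact fb_B_zero ω n x y (Or.inl h)
    · exact fb_C_zero ω n x y (Or.inl h)
end
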